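/- arXiv:2511.06524 — 9 statements merged into one kernel-verified Lean document; each statement's English description precedes it below -/
import Mathlib

section
/- Let A ∈ ℝ^{n×n}, B ∈ ℝ^{n×m}, C ∈ ℝ^{p×n} and μ := (p+m)·n. Suppose the pair (C, A) is observable, i.e. the observability matrix [C; CA; …; C·A^{n−1}] has rank n, and F ∈ ℝ^{n×n} is Hurwitz with n distinct eigenvalues. Then there exist an invertible matrix T ∈ ℝ^{n×n} and a vector θ ∈ ℝ^{μ} such that: for every u : ℝ → ℝ^m, every differentiable x : ℝ → ℝ^n with x'(t) = A·x(t) + B·u(t) for all t ≥ 0, with y(t) := C·x(t), and every differentiable M : ℝ → ℝ^{n×μ} with M'(t) = F·M(t) + [y(t)^⊤ ⊗ I_n , u(t)^⊤ ⊗ I_n] for all t ≥ 0, it holds for all t ≥ 0 that T·x(t) = M(t)·θ + exp(F·t)·(T·x(0) − M(0)·θ). -/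
open Matrix Filter
open scoped Kronecker

/-- Column-stacking vectorization `vec X : (col, row) ↦ X row col`
(`vec X` stacks the columns of `X` one below another). -/
def mvec {l : ℕ} {K : Type*} (X : Matrix (Fin l) K ℝ) : K × Fin l → ℝ :=
  fun q => X q.2 q.1

/-- The Kronecker product `θᵀ ⊗ S` of a row vector `θᵀ` with a square matrix `S`,
with the trivial row index of `θᵀ` flattened away. -/
def rowKron {n : ℕ} {K : Type*} (θ : K → ℝ) (S : Matrix (Fin n) (Fin n) ℝ) :
    Matrix (Fin n) (K × Fin n) ℝ :=
  ((Matrix.of fun (_ : Fin 1) j => θ j) ⊗ₖ S).submatrix (fun i => ((0 : Fin 1), i)) id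

/-- Column index set of the Kreisselmeier filter state `M ∈ ℝ^{n × (p+m)n}`. -/
abbrev Kix (n m p : ℕ) := (Fin p × Fin n) ⊕ (Fin m × Fin n)

/-- The regressor `[yᵀ ⊗ Iₙ , uᵀ ⊗ Iₙ] ∈ ℝ^{n × (p+m)n}` (horizontal concatenation). -/
def regressor {m p : ℕ} (n : ℕ) (y : Fin p → ℝ) (u : Fin m → ℝ) :
    Matrix (Fin n) (Kix n m p) ℝ :=
  Matrix.fromCols (rowKron y (1 : Matrix (Fin n) (Fin n) ℝ))
    (rowKron u (1 : Matrix (Fin n) (Fin n) ℝ))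

/-- A real square matrix is Hurwitz if all of its eigenvalues over `ℂ`
have strictly negative real part. -/
def IsHurwitz {N : Type*} [Fintype N] [DecidableEq N] (A : Matrix N N ℝ) : Prop :=
  ∀ z ∈ spectrum ℂ (A.map (Complex.ofReal : ℝ → ℂ)), z.re < 0

/-- PBH test for stabilizability: for every `λ ∈ ℂ` with `Re λ ≥ 0`,
`rank [λ·I − A₀ , B₀] = q` over `ℂ`. -/
def IsStabilizable {q m : Type*} [Fintype q] [DecidableEq q] [Fintype m]
    (A₀ : Matrix q q ℝ) (B₀ : Matrix q m ℝ) : Prop :=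
  ∀ z : ℂ, 0 ≤ z.re →
    (Matrix.fromCols (z • (1 : Matrix q q ℂ) - A₀.map (Complex.ofReal : ℝ → ℂ))
      (B₀.map (Complex.ofReal : ℝ → ℂ))).rank = Fintype.card q

/-- Euclidean norm of a vector. -/
noncomputable def euclNorm {ι : Type*} [Fintype ι] (v : ι → ℝ) : ℝ :=
  Real.sqrt (∑ i, v i ^ 2)

/-- Frobenius norm of a matrix. -/
noncomputable def frobNorm {ι K : Type*} [Fintype ι] [Fintype K] (X : Matrix ι K ℝ) : ℝ :=
  Real.sqrt (∑ i, ∑ j, X i j ^ 2)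

/-- `F_ξ := I_μ ⊗ F`. -/
def Fxi {n m p : ℕ} (F : Matrix (Fin n) (Fin n) ℝ) :
    Matrix (Kix n m p × Fin n) (Kix n m p × Fin n) ℝ :=
  (1 : Matrix (Kix n m p) (Kix n m p) ℝ) ⊗ₖ F

/-- `B_ξ := [0_{pn²×m} ; I_m ⊗ vec(I_n)]` (vertical concatenation), written entrywise
on the flattened row index `Kix n m p × Fin n`. -/
def Bxi (n m p : ℕ) : Matrix (Kix n m p × Fin n) (Fin m) ℝ :=
  Matrix.of fun q j =>
    Sum.elim (fun _ => (0 : ℝ))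
      (fun ja => (1 : Matrix (Fin m) (Fin m) ℝ) ja.1 j *
        (1 : Matrix (Fin n) (Fin n) ℝ) ja.2 q.2) q.1

/-- `L_ξ := [I_p ⊗ vec(I_n) ; 0_{mn²×p}]` (vertical concatenation), written entrywise
on the flattened row index `Kix n m p × Fin n`. -/
def Lxi (n m p : ℕ) : Matrix (Kix n m p × Fin n) (Fin p) ℝ :=
  Matrix.of fun q j =>
    Sum.elim (fun ya => (1 : Matrix (Fin p) (Fin p) ℝ) ya.1 j *
        (1 : Matrix (Fin n) (Fin n) ℝ) ya.2 q.2) (fun _ => (0 : ℝ)) q.1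

section Helpers

/-- `v 0 = 0`, `v (k+1) = v k A + l k C`. -/
def hey {n p : ℕ} (A : Matrix (Fin n) (Fin n) ℝ) (C : Matrix (Fin p) (Fin n) ℝ)
    (l : ℕ → Fin p → ℝ) : ℕ → Fin n → ℝ
  | 0 => 0
  | k + 1 => hey A C l k ᵥ* A + l k ᵥ* C

lemma hey_congr {n p : ℕ} (A : Matrix (Fin n) (Fin n) ℝ) (C : Matrix (Fin p) (Fin n) ℝ)
    (l l' : ℕ → Fin p → ℝ) (k : ℕ) (h : ∀ i < k, l i = l' i) :
    hey A C l k = hey A C l' k := by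
  induction k with
  | zero => rfl
  | succ k ih =>
    simp only [hey]
    rw [ih (fun i hi => h i (by omega)), h k (by omega)]

lemma obs_top {n p : ℕ} (A : Matrix (Fin n) (Fin n) ℝ) (C : Matrix (Fin p) (Fin n) ℝ)
    (hobs : (Matrix.of fun q : Fin n × Fin p => fun j : Fin n =>
      (C * A ^ (q.1 : ℕ)) q.2 j).rank = n)
    (S : Submodule ℝ (Fin n → ℝ)) (hA : ∀ v ∈ S, v ᵥ* A ∈ S) (hC : ∀ l, l ᵥ* C ∈ S) :
    S = ⊤ := by
  rw [Matrix.rank_eq_finrank_span_row] at hobs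
  have h1 : Submodule.span ℝ (Set.range (Matrix.of fun q : Fin n × Fin p => fun j : Fin n =>
      (C * A ^ (q.1 : ℕ)) q.2 j).row) = ⊤ := by
    apply Submodule.eq_top_of_finrank_eq
    rw [hobs]; simp
  rw [eq_top_iff, ← h1, Submodule.span_le]
  have key : ∀ (k : ℕ) (j : Fin p), (fun i => (C * A ^ k) j i) ∈ S := by
    intro k j
    induction k with
    | zero =>
      have := hC (Pi.single j 1)
      rw [Matrix.single_one_vecMul] at this
      rw [pow_zero, Matrix.mul_one]
      exact this
    | succ k ih =>
      have := hA _ ih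
      convert this using 1
      ext i
      rw [pow_succ, ← Matrix.mul_assoc, Matrix.mul_apply]
      rfl
  rintro _ ⟨q, rfl⟩
  exact key q.1 q.2

lemma heymann {n p : ℕ} (A : Matrix (Fin n) (Fin n) ℝ) (C : Matrix (Fin p) (Fin n) ℝ)
    (hobs : (Matrix.of fun q : Fin n × Fin p => fun j : Fin n =>
      (C * A ^ (q.1 : ℕ)) q.2 j).rank = n) (k : ℕ) (hk : k ≤ n) :
    ∃ l : ℕ → Fin p → ℝ, LinearIndependent ℝ (fun i : Fin k => hey A C l (i + 1)) := by
  induction k with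
  | zero => exact ⟨fun _ => 0, linearIndependent_empty_type⟩
  | succ k ih =>
    obtain ⟨l, hl⟩ := ih (by omega)
    set S := Submodule.span ℝ (Set.range (fun i : Fin k => hey A C l (i + 1))) with hS
    have hex : ∃ w : Fin p → ℝ, hey A C l k ᵥ* A + w ᵥ* C ∉ S := by
      by_contra! hcon
      have h0 : hey A C l k ᵥ* A ∈ S := by simpa using hcon 0
      have hC : ∀ w : Fin p → ℝ, w ᵥ* C ∈ S := fun w => by
        simpa using S.sub_mem (hcon w) h0
      have hmem : ∀ i : ℕ, i < k → hey A C l (i + 1) ∈ S := fun i hi =>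
        Submodule.subset_span ⟨⟨i, hi⟩, rfl⟩
      have htop : S = ⊤ := by
        apply obs_top A C hobs S _ hC
        intro v hv
        induction hv using Submodule.span_induction with
        | mem x hx =>
          obtain ⟨⟨i, hi⟩, rfl⟩ := hx
          simp only
          by_cases h : i + 1 = k
          · rw [h]; exact h0
          · have := S.sub_mem (hmem (i + 1) (by omega)) (hC (l (i + 1)))
            simpa [hey] using this
        | zero => simp
        | add x y _ _ hx hy => rw [Matrix.add_vecMul]; exact S.add_mem hx hy
        | smul a x _ hx => rw [Matrix.smul_vecMul]; exact S.smul_mem a hx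
      have hd : Module.finrank ℝ S ≤ k := by
        have := finrank_range_le_card (R := ℝ) (fun i : Fin k => hey A C l (i + 1))
        simpa [Set.finrank, hS] using this
      rw [htop] at hd
      simp at hd
      omega
    obtain ⟨w, hw⟩ := hex
    refine ⟨Function.update l k w, ?_⟩
    have e : (fun i : Fin (k + 1) => hey A C (Function.update l k w) (i + 1)) =
        Fin.snoc (α := fun _ => Fin n → ℝ) (fun i : Fin k => hey A C l (i + 1))
          (hey A C l k ᵥ* A + w ᵥ* C) := by
      funext i
      refine Fin.lastCases ?_ (fun i => ?_) i
      · rw [Fin.snoc_last]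
        simp only [Fin.val_last, hey, Function.update_self]
        rw [hey_congr A C (Function.update l k w) l k]
        intro i hi
        rw [Function.update_of_ne (by omega)]
      · rw [Fin.snoc_castSucc]
        apply hey_congr
        intro j hj
        have := i.2
        simp only [Fin.val_castSucc] at hj
        rw [Function.update_of_ne (by omega)]
    rw [e, linearIndependent_finSnoc]
    exact ⟨hl, hw⟩

/-- Reduction to a single output. -/
lemma single_output {n p : ℕ} (A : Matrix (Fin n) (Fin n) ℝ) (C : Matrix (Fin p) (Fin n) ℝ)
    (hobs : (Matrix.of fun q : Fin n × Fin p => fun j : Fin n =>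
      (C * A ^ (q.1 : ℕ)) q.2 j).rank = n) :
    ∃ (K : Matrix (Fin n) (Fin p) ℝ) (r : Fin p → ℝ),
      IsUnit (Matrix.of fun i : Fin n => (r ᵥ* C) ᵥ* (A + K * C) ^ (i : ℕ)) := by
  obtain ⟨l, hl⟩ := heymann A C hobs n le_rfl
  set S : Matrix (Fin n) (Fin n) ℝ := Matrix.of fun i : Fin n => hey A C l (i + 1) with hS
  have hSu : IsUnit S := Matrix.linearIndependent_rows_iff_isUnit.1 hl
  have hdet : IsUnit S.det := (Matrix.isUnit_iff_isUnit_det S).1 hSu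
  let L : Matrix (Fin n) (Fin p) ℝ := Matrix.of fun i : Fin n => l (i + 1)
  refine ⟨S⁻¹ * L, l 0, ?_⟩
  have hSK : S * (S⁻¹ * L) = L := by
    rw [← Matrix.mul_assoc, Matrix.mul_nonsing_inv _ hdet, Matrix.one_mul]
  have hrow : ∀ i : Fin n, hey A C l (i + 1) ᵥ* (S⁻¹ * L) = l (i + 1) := by
    intro i
    have := congrFun hSK i
    rw [Matrix.mul_apply_eq_vecMul] at this
    exact this
  convert hSu using 1
  rw [hS]
  congr 1
  funext ⟨i, hi⟩
  simp only
  induction i with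
  | zero => simp [hey]
  | succ i ih =>
    rw [pow_succ, ← Matrix.vecMul_vecMul, ih (by omega), Matrix.vecMul_add,
      ← Matrix.vecMul_vecMul, hrow ⟨i, by omega⟩]
    rfl

/-- Cyclic vector for a real matrix with simple complex spectrum. -/
lemma exists_cyclic {n : ℕ} (F : Matrix (Fin n) (Fin n) ℝ)
    (hdist : ((F.map (Complex.ofReal : ℝ → ℂ)).charpoly.roots).Nodup) :
    ∃ f : Fin n → ℝ, IsUnit (Matrix.of fun k i : Fin n => ((F ^ (i : ℕ)) *ᵥ f) k) := by
  set G := F.map (Complex.ofReal : ℝ → ℂ) with hG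
  have hcard : G.charpoly.roots.toFinset.card = n := by
    rw [Multiset.toFinset_card_of_nodup hdist,
      ← (IsAlgClosed.splits G.charpoly).natDegree_eq_card_roots, Matrix.charpoly_natDegree_eq_dim]
    simp
  let ev : Fin n → ℂ := fun i => (G.charpoly.roots.toFinset.equivFinOfCardEq hcard).symm i
  have hinj : Function.Injective ev := fun i j h => by
    simpa [ev, Subtype.ext_iff] using h
  have hroot : ∀ i, ∃ v : Fin n → ℂ, Module.End.HasEigenvector (Matrix.toLin' G) (ev i) v := by
    intro i
    have h := ((G.charpoly.roots.toFinset.equivFinOfCardEq hcard).symm i).2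
    rw [Multiset.mem_toFinset, Polynomial.mem_roots'] at h
    have h2 := Matrix.mem_spectrum_iff_isRoot_charpoly.2 h.2
    rw [← Matrix.spectrum_toLin'] at h2
    exact (Module.End.hasEigenvalue_iff_mem_spectrum.2 h2).exists_hasEigenvector
  choose v hv using hroot
  have hli := Module.End.eigenvectors_linearIndependent' _ ev hinj v hv
  have hpow : ∀ (k : ℕ) (i : Fin n), (G ^ k) *ᵥ v i = ev i ^ k • v i := by
    intro k i
    have := (hv i).apply_eq_smul
    rw [Matrix.toLin'_apply] at this
    induction k with
    | zero => simp
    | succ k ih =>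
      rw [pow_succ, ← Matrix.mulVec_mulVec, this, Matrix.mulVec_smul, ih, smul_smul, pow_succ,
        mul_comm]
  let P : MvPolynomial (Fin n) ℝ := (Matrix.of fun k i : Fin n =>
    ∑ j, MvPolynomial.C ((F ^ (i : ℕ)) k j) * MvPolynomial.X j).det
  have hP : P ≠ 0 := by
    intro h0
    have h1 : MvPolynomial.aeval (∑ i, v i) P = 0 := by rw [h0, map_zero]
    have h2 : MvPolynomial.aeval (∑ i, v i) P
        = ((Matrix.of fun k i => v i k : Matrix (Fin n) (Fin n) ℂ) * Matrix.vandermonde ev).det := by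
      simp only [P]
      rw [AlgHom.map_det]
      congr 1
      ext k i
      have h3 : ((G ^ (i : ℕ)) *ᵥ (∑ i, v i)) k = ∑ j, v j k * ev j ^ (i : ℕ) := by
        rw [Matrix.mulVec_sum]
        simp [hpow, mul_comm]
      rw [Matrix.mul_apply]
      simp only [Matrix.of_apply, Matrix.vandermonde_apply]
      rw [← h3]
      have h4 : G ^ (i : ℕ) = (F ^ (i : ℕ)).map (Complex.ofReal : ℝ → ℂ) := by
        exact (map_pow (Complex.ofRealHom.mapMatrix) F i).symm
      rw [h4]
      simp [Matrix.mulVec, dotProduct]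
    rw [h2, Matrix.det_mul] at h1
    rcases mul_eq_zero.1 h1 with h | h
    · have hu : IsUnit (Matrix.of v) := Matrix.linearIndependent_rows_iff_isUnit.1 hli
      have := ((Matrix.isUnit_iff_isUnit_det _).1 hu).ne_zero
      rw [← Matrix.det_transpose] at this
      exact this h
    · exact Matrix.det_vandermonde_ne_zero_iff.2 hinj h
  obtain ⟨f, hf⟩ : ∃ f : Fin n → ℝ, MvPolynomial.eval f P ≠ 0 := by
    by_contra! h
    exact hP (MvPolynomial.funext fun x => by simp [h x])
  refine ⟨f, (Matrix.isUnit_iff_isUnit_det _).2 (isUnit_iff_ne_zero.2 ?_)⟩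
  convert hf using 1
  simp only [P]
  rw [RingHom.map_det]
  congr 1
  ext k i
  simp [Matrix.mulVec, dotProduct]

/-- Hankel matrix of a monic polynomial of degree `n` is invertible. -/
lemma hankel_unit {n : ℕ} (q : Polynomial ℝ) (hq : q.Monic) (hd : q.natDegree = n) :
    IsUnit (Matrix.of fun i j : Fin n => q.coeff ((i : ℕ) + j + 1)) := by
  rw [Matrix.isUnit_iff_isUnit_det]
  set H : Matrix (Fin n) (Fin n) ℝ := Matrix.of fun i j : Fin n => q.coeff ((i : ℕ) + j + 1)
  have h1 : (H.submatrix id (Fin.revPerm : Equiv.Perm (Fin n))).det = 1 := by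
    rw [Matrix.det_of_isUpperTriangular]
    · apply Finset.prod_eq_one
      intro i _
      have : (i : ℕ) + (Fin.rev i : Fin n) + 1 = n := by rw [Fin.val_rev]; omega
      simp only [Matrix.submatrix_apply, H, Matrix.of_apply, id, Fin.revPerm_apply]
      rw [this, ← hd]
      exact hq
    · intro i j hij
      simp only [id] at hij
      simp only [Matrix.submatrix_apply, H, Matrix.of_apply, id, Fin.revPerm_apply]
      apply Polynomial.coeff_eq_zero_of_natDegree_lt
      rw [hd, Fin.val_rev]
      have : (j : ℕ) < i := hij
      omega
  rw [Matrix.det_permute'] at h1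
  exact IsUnit.of_mul_eq_one_right _ h1

lemma sum_identity {V : Type*} [AddCommGroup V] [Module ℝ V] (n : ℕ) (hn : 0 < n) (q : ℕ → ℝ)
    (hq : ∀ k, n < k → q k = 0) (G : ℕ → ℕ → V) :
    ∑ i ∈ Finset.range n, ∑ j ∈ Finset.range n, q (i + j + 1) • (G (i + 1) j - G i (j + 1))
     = ∑ i ∈ Finset.range (n + 1), q i • G i 0 - ∑ j ∈ Finset.range (n + 1), q j • G 0 j := by
  have e1 : ∑ i ∈ Finset.range n, ∑ j ∈ Finset.range n, q (i + j + 1) • G (i + 1) j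
      = ∑ i ∈ Finset.range n, ∑ j ∈ Finset.range n, q (i + j) • G i j
        + q n • G n 0 - ∑ j ∈ Finset.range n, q j • G 0 j := by
    have h1 := Finset.sum_range_succ (fun i => ∑ j ∈ Finset.range n, q (i + j) • G i j) n
    have h2 := Finset.sum_range_succ' (fun i => ∑ j ∈ Finset.range n, q (i + j) • G i j) n
    have h3 : ∑ j ∈ Finset.range n, q (n + j) • G n j = q n • G n 0 := by
      rw [Finset.sum_eq_single_of_mem 0 (by simpa using hn)]
      · simp
      · intro b _ hb; rw [hq _ (by omega), zero_smul]
    rw [h3] at h1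
    rw [← h1, h2]
    simp only [zero_add, add_sub_cancel_right]
    refine Finset.sum_congr rfl fun i _ => Finset.sum_congr rfl fun j _ => ?_
    rw [show i + j + 1 = i + 1 + j by ring]
  have e2 : ∑ i ∈ Finset.range n, ∑ j ∈ Finset.range n, q (i + j + 1) • G i (j + 1)
      = ∑ i ∈ Finset.range n, ∑ j ∈ Finset.range n, q (i + j) • G i j
        + q n • G 0 n - ∑ j ∈ Finset.range n, q j • G j 0 := by
    have h0 : ∀ i, ∑ j ∈ Finset.range n, q (i + j + 1) • G i (j + 1)
        = ∑ j ∈ Finset.range n, q (i + j) • G i j + q (i + n) • G i n - q i • G i 0 := by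
      intro i
      rw [← Finset.sum_range_succ (fun j => q (i + j) • G i j), Finset.sum_range_succ']
      simp [add_assoc]
    simp only [h0, Finset.sum_sub_distrib, Finset.sum_add_distrib]
    have h3 : ∑ i ∈ Finset.range n, q (i + n) • G i n = q n • G 0 n := by
      rw [Finset.sum_eq_single_of_mem 0 (by simpa using hn)]
      · simp
      · intro b _ hb; rw [hq _ (by omega), zero_smul]
    rw [h3]
  simp only [smul_sub, Finset.sum_sub_distrib]
  rw [e1, e2, Finset.sum_range_succ, Finset.sum_range_succ]
  abel

/-- Single-output Sylvester solution. -/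
lemma sylvester {n : ℕ} (A F : Matrix (Fin n) (Fin n) ℝ) (c f : Fin n → ℝ)
    (hc : IsUnit (Matrix.of fun i : Fin n => c ᵥ* A ^ (i : ℕ)))
    (hf : IsUnit (Matrix.of fun k i : Fin n => ((F ^ (i : ℕ)) *ᵥ f) k)) :
    ∃ (T : Matrix (Fin n) (Fin n) ℝ) (g : Fin n → ℝ), IsUnit T ∧
      F * T - T * A = Matrix.vecMulVec g c := by
  rcases Nat.eq_zero_or_pos n with h0 | hn
  · subst h0
    exact ⟨1, 0, isUnit_one, Subsingleton.elim _ _⟩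
  set q := A.charpoly with hqdef
  have hd : q.natDegree = n := by simp [hqdef, Matrix.charpoly_natDegree_eq_dim]
  have hH := hankel_unit q (Matrix.charpoly_monic A) hd
  refine ⟨_, (Polynomial.aeval F q) *ᵥ f, (hf.mul hH).mul hc, ?_⟩
  set P := Matrix.vecMulVec f c with hP
  have hT : (Matrix.of fun k i : Fin n => ((F ^ (i : ℕ)) *ᵥ f) k) *
      (Matrix.of fun i j : Fin n => q.coeff ((i : ℕ) + j + 1)) *
      (Matrix.of fun i : Fin n => c ᵥ* A ^ (i : ℕ)) =
      ∑ i ∈ Finset.range n, ∑ j ∈ Finset.range n, q.coeff (i + j + 1) • (F ^ i * P * A ^ j) := by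
    have hG : ∀ i j : ℕ, F ^ i * P * A ^ j = Matrix.vecMulVec (F ^ i *ᵥ f) (c ᵥ* A ^ j) := by
      intro i j
      rw [hP, Matrix.mul_vecMulVec, Matrix.vecMulVec_mul]
    simp only [hG]
    rw [Finset.sum_range]
    simp only [Finset.sum_range]
    ext a b
    rw [Matrix.mul_apply]
    simp only [Matrix.mul_apply, Matrix.of_apply, Matrix.sum_apply, Matrix.smul_apply,
      Matrix.vecMulVec_apply, smul_eq_mul, Finset.sum_mul]
    rw [Finset.sum_comm]
    refine Finset.sum_congr rfl fun i _ => Finset.sum_congr rfl fun j _ => ?_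
    ring
  rw [hT]
  have hid := sum_identity n hn q.coeff
    (fun k hk => Polynomial.coeff_eq_zero_of_natDegree_lt (by omega))
    (fun i j => F ^ i * P * A ^ j)
  have hA : ∑ j ∈ Finset.range (n + 1), q.coeff j • (F ^ 0 * P * A ^ j) = 0 := by
    have := Matrix.aeval_self_charpoly A
    rw [← hqdef, Polynomial.aeval_eq_sum_range, hd] at this
    have h2 := congrArg (fun Z => P * Z) this
    simpa [Matrix.mul_sum] using h2
  have hF : ∑ j ∈ Finset.range (n + 1), q.coeff j • (F ^ j * P * A ^ 0)
      = Polynomial.aeval F q * P := by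
    rw [Polynomial.aeval_eq_sum_range, hd]
    simp [Matrix.sum_mul]
  rw [hA, hF, sub_zero, hP, Matrix.mul_vecMulVec] at hid
  rw [← hid, Matrix.mul_sum, Matrix.sum_mul, ← Finset.sum_sub_distrib]
  refine Finset.sum_congr rfl fun i _ => ?_
  rw [Matrix.mul_sum, Matrix.sum_mul, ← Finset.sum_sub_distrib]
  refine Finset.sum_congr rfl fun j _ => ?_
  rw [Matrix.mul_smul, Matrix.smul_mul, ← smul_sub, pow_succ', pow_succ]
  simp only [Matrix.mul_assoc, hP]

section ode
open scoped Matrix.Norms.Operator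

lemma exp_entry_deriv {n : ℕ} (F : Matrix (Fin n) (Fin n) ℝ) (t : ℝ) (i j : Fin n) :
    HasDerivAt (fun s : ℝ => NormedSpace.exp (s • F) i j) ((NormedSpace.exp (t • F) * F) i j) t := by
  have h := hasDerivAt_exp_smul_const F t
  exact hasDerivAt_pi.1 (hasDerivAt_pi.1 h i) j

lemma exp_inv_mul {n : ℕ} (F : Matrix (Fin n) (Fin n) ℝ) (t : ℝ) :
    NormedSpace.exp (t • F) * NormedSpace.exp (t • (-F)) = 1 := by
  rw [← Matrix.exp_add_of_commute]
  · simp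
  · rw [smul_neg]; exact (Commute.refl _).neg_right

end ode

lemma ode_unique {n : ℕ} (F : Matrix (Fin n) (Fin n) ℝ) (e : ℝ → Fin n → ℝ)
    (he : ∀ t, 0 ≤ t → ∀ i, HasDerivAt (fun s => e s i) ((F *ᵥ e t) i) t) (t : ℝ) (ht : 0 ≤ t) :
    e t = NormedSpace.exp (t • F) *ᵥ e 0 := by
  have hder : ∀ s, 0 ≤ s → ∀ i,
      HasDerivAt (fun s => (NormedSpace.exp (s • (-F)) *ᵥ e s) i) 0 s := by
    intro s hs i
    have h1 : HasDerivAt (fun s => ∑ j, NormedSpace.exp (s • (-F)) i j * e s j)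
        (∑ j, ((NormedSpace.exp (s • (-F)) * (-F)) i j * e s j +
          NormedSpace.exp (s • (-F)) i j * (F *ᵥ e s) j)) s :=
      HasDerivAt.fun_sum fun j _ => (exp_entry_deriv (-F) s i j).mul (he s hs j)
    convert h1 using 1
    · rfl
    rw [Finset.sum_add_distrib]
    change 0 = ((NormedSpace.exp (s • (-F)) * (-F)) *ᵥ e s) i
      + (NormedSpace.exp (s • (-F)) *ᵥ (F *ᵥ e s)) i
    rw [Matrix.mulVec_mulVec, Matrix.mul_neg, Matrix.neg_mulVec]
    simp
  have hconst : NormedSpace.exp (t • (-F)) *ᵥ e t = e 0 := by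
    funext i
    have := constant_of_has_deriv_right_zero (a := 0) (b := t)
      (f := fun s => (NormedSpace.exp (s • (-F)) *ᵥ e s) i)
      (fun s hs => (hder s hs.1 i).continuousAt.continuousWithinAt)
      (fun s hs => (hder s hs.1 i).hasDerivWithinAt) t ⟨ht, le_rfl⟩
    rw [this]
    simp
  rw [← hconst, Matrix.mulVec_mulVec, exp_inv_mul, Matrix.one_mulVec]

lemma regressor_mulVec {n m p : ℕ} (y : Fin p → ℝ) (u : Fin m → ℝ)
    (L : Matrix (Fin n) (Fin p) ℝ) (N : Matrix (Fin n) (Fin m) ℝ) :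
    regressor n y u *ᵥ (Sum.elim (fun q => L q.2 q.1) (fun q => N q.2 q.1) : Kix n m p → ℝ)
      = L *ᵥ y + N *ᵥ u := by
  have key : ∀ {k : ℕ} (y : Fin k → ℝ) (L : Matrix (Fin n) (Fin k) ℝ),
      rowKron y (1 : Matrix (Fin n) (Fin n) ℝ) *ᵥ (fun q => L q.2 q.1) = L *ᵥ y := by
    intro k y L
    ext i
    simp [Matrix.mulVec, dotProduct, rowKron, Matrix.kroneckerMap_apply, Fintype.sum_prod_type,
      Matrix.one_apply, mul_comm]
  rw [regressor, Matrix.fromCols_mulVec_sumElim, key, key]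

end Helpers

/-- Lemma 1 in the paper, Kreisselmeier's filter relation.
If `(C, A)` is observable and `F` is Hurwitz with `n` distinct eigenvalues, then there
exist an invertible `T` and `θ ∈ ℝ^{(p+m)n}` such that for every trajectory of the plant
`x' = Ax + Bu`, `y = Cx` and of the filter `M' = FM + [yᵀ ⊗ Iₙ, uᵀ ⊗ Iₙ]`, one has
`T x(t) = M(t) θ + exp(Ft) (T x(0) − M(0) θ)` for all `t ≥ 0`. -/
theorem stmt0 {n m p : ℕ}
    (A : Matrix (Fin n) (Fin n) ℝ) (B : Matrix (Fin n) (Fin m) ℝ)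
    (C : Matrix (Fin p) (Fin n) ℝ)
    (hobs : (Matrix.of fun q : Fin n × Fin p => fun j : Fin n =>
      (C * A ^ (q.1 : ℕ)) q.2 j).rank = n)
    (F : Matrix (Fin n) (Fin n) ℝ) (hHur : IsHurwitz F)
    (hdist : ((F.map (Complex.ofReal : ℝ → ℂ)).charpoly.roots).Nodup) :
    ∃ (T : Matrix (Fin n) (Fin n) ℝ) (θ : Kix n m p → ℝ), IsUnit T ∧
      ∀ (u : ℝ → Fin m → ℝ) (x : ℝ → Fin n → ℝ) (M : ℝ → Matrix (Fin n) (Kix n m p) ℝ),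
        (∀ t, 0 ≤ t → ∀ i, HasDerivAt (fun s => x s i)
            ((A.mulVec (x t) + B.mulVec (u t)) i) t) →
        (∀ t, 0 ≤ t → ∀ i j, HasDerivAt (fun s => M s i j)
            ((F * M t + regressor n (C.mulVec (x t)) (u t)) i j) t) →
        ∀ t, 0 ≤ t →
          T.mulVec (x t) = (M t).mulVec θ +
            (NormedSpace.exp (t • F)).mulVec (T.mulVec (x 0) - (M 0).mulVec θ) := by
  obtain ⟨K, r, hc⟩ := single_output A C hobs
  obtain ⟨f, hf⟩ := exists_cyclic F hdist
  obtain ⟨T, g, hT, hS⟩ := sylvester (A + K * C) F (r ᵥ* C) f hc hf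
  set L : Matrix (Fin n) (Fin p) ℝ := -(T * K) - Matrix.vecMulVec g r with hL
  have hTA : T * A = F * T + L * C := by
    rw [← Matrix.vecMulVec_mul] at hS
    rw [hL, Matrix.sub_mul, ← hS, Matrix.mul_add, Matrix.neg_mul, Matrix.mul_assoc]
    abel
  refine ⟨T, Sum.elim (fun q => L q.2 q.1) (fun q => (T * B) q.2 q.1), hT, ?_⟩
  set θ : Kix n m p → ℝ := Sum.elim (fun q => L q.2 q.1) (fun q => (T * B) q.2 q.1) with hθ
  intro u x M hx hM t ht
  have h := ode_unique F (fun s => T *ᵥ x s - M s *ᵥ θ) ?_ t ht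
  · rw [← h]
    abel
  intro s hs i
  have h1 : HasDerivAt (fun s => ∑ j, T i j * x s j - ∑ j, M s i j * θ j)
      (∑ j, T i j * (A.mulVec (x s) + B.mulVec (u s)) j -
       ∑ j, (F * M s + regressor n (C.mulVec (x s)) (u s)) i j * θ j) s :=
    (HasDerivAt.fun_sum fun j _ => (hx s hs j).const_mul _).sub
      (HasDerivAt.fun_sum fun j _ => (hM s hs i j).mul_const _)
  convert h1 using 1
  · rfl
  change (F *ᵥ (T *ᵥ x s - M s *ᵥ θ)) i = (T *ᵥ (A *ᵥ (x s) + B *ᵥ (u s))) i -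
    ((F * M s + regressor n (C *ᵥ (x s)) (u s)) *ᵥ θ) i
  rw [← Pi.sub_apply]
  congr 1
  rw [Matrix.add_mulVec, hθ, regressor_mulVec, ← hθ, Matrix.mulVec_sub, Matrix.mulVec_add]
  simp only [Matrix.mulVec_mulVec]
  rw [hTA, Matrix.add_mulVec]
  simp only [Pi.sub_apply, Pi.add_apply]
  ring
end

section
/- Let A ∈ ℝ^{n×n}, B ∈ ℝ^{n×m}, C ∈ ℝ^{p×n}, μ := (p+m)·n, L ∈ ℝ^{n×p}, let F ∈ ℝ^{n×n} be Hurwitz, and let T ∈ ℝ^{n×n} be invertible with F·T = T·(A − L·C). Define θ := [vec(T·L); vec(T·B)] ∈ ℝ^{μ}. Let u, x, y, M be as follows: x : ℝ → ℝ^n differentiable with x'(t) = A·x(t) + B·u(t), y(t) := C·x(t), and M : ℝ → ℝ^{n×μ} differentiable with M'(t) = F·M(t) + [y(t)^⊤ ⊗ I_n , u(t)^⊤ ⊗ I_n] for all t ≥ 0. Define the transverse coordinate β(t) := T·x(t) − M(t)·θ ∈ ℝ^n. Then β is differentiable with β'(t) = F·β(t) for all t ≥ 0, so β(t) = exp(F·t)·β(0),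 and there exist constants c > 0 and λ > 0 such that ‖β(t)‖ ≤ c·e^{−λ·t}·‖β(0)‖ for all t ≥ 0. -/
open Matrix Filter
open scoped Kronecker

open scoped Matrix.Norms.Operator in
/-- On a generalized eigenvector the exponential is a polynomial times a scalar exponential. -/
lemma aux_exp_gen {n : ℕ} (G : Matrix (Fin n) (Fin n) ℂ) (z : ℂ) (w : Fin n → ℂ) (k : ℕ)
    (hk : ((G - z • (1 : Matrix (Fin n) (Fin n) ℂ)) ^ k).mulVec w = 0) (t : ℝ) :
    (NormedSpace.exp (t • G)).mulVec w = Complex.exp (t * z) •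
      ∑ j ∈ Finset.range k, ((j.factorial : ℂ)⁻¹ * (t : ℂ) ^ j) •
        ((G - z • (1 : Matrix (Fin n) (Fin n) ℂ)) ^ j).mulVec w := by
  set N := G - z • (1 : Matrix (Fin n) (Fin n) ℂ) with hN
  have h1 : t • G = algebraMap ℂ (Matrix (Fin n) (Fin n) ℂ) (t * z) + (t : ℂ) • N := by
    rw [hN, Algebra.algebraMap_eq_smul_one, smul_sub, smul_smul, add_sub_cancel]
    ext i j
    simp
  have h2 : NormedSpace.exp (t • G) = Complex.exp (t * z) • NormedSpace.exp ((t : ℂ) • N) := by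
    have h6 : NormedSpace.exp (algebraMap ℂ (Matrix (Fin n) (Fin n) ℂ) (t * z)) =
        algebraMap ℂ (Matrix (Fin n) (Fin n) ℂ) (Complex.exp (t * z)) := by
      rw [Complex.exp_eq_exp_ℂ]
      exact (NormedSpace.algebraMap_exp_comm _).symm
    rw [h1, Matrix.exp_add_of_commute _ _ (Algebra.commute_algebraMap_left _ _), h6, ← Algebra.smul_def]
  rw [h2, Matrix.smul_mulVec]
  congr 1
  have h3 := NormedSpace.exp_series_hasSum_exp' (𝕂 := ℂ) ((t : ℂ) • N)
  have h4 : HasSum (fun j : ℕ => ((j.factorial : ℂ)⁻¹ * (t : ℂ) ^ j) • (N ^ j).mulVec w)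
      ((NormedSpace.exp ((t : ℂ) • N)).mulVec w) := by
    let φ : Matrix (Fin n) (Fin n) ℂ →+ (Fin n → ℂ) :=
      { toFun := fun X => X.mulVec w
        map_zero' := Matrix.zero_mulVec _
        map_add' := fun X Y => Matrix.add_mulVec _ _ _ }
    have hφ : Continuous φ := by
      change Continuous (fun X : Matrix (Fin n) (Fin n) ℂ => X.mulVec w)
      exact Continuous.matrix_mulVec continuous_id continuous_const
    have h5 := h3.map φ hφ
    suffices h7 : (fun j : ℕ => ((j.factorial : ℂ)⁻¹ * (t : ℂ) ^ j) • (N ^ j).mulVec w) =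
        φ ∘ fun j : ℕ => (j.factorial : ℂ)⁻¹ • ((t : ℂ) • N) ^ j by
      rw [h7]
      exact h5
    funext j
    change _ = (((j.factorial : ℂ)⁻¹) • ((t : ℂ) • N) ^ j).mulVec w
    rw [smul_pow, smul_smul, Matrix.smul_mulVec]
  refine h4.unique (hasSum_sum_of_ne_finset_zero ?_)
  intro j hj
  have hj' : k ≤ j := by simpa using hj
  have : N ^ j = N ^ (j - k) * N ^ k := by rw [← pow_add, Nat.sub_add_cancel hj']
  rw [this, ← Matrix.mulVec_mulVec, hk, Matrix.mulVec_zero, smul_zero]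

lemma aux_decay_gen {n : ℕ} (G : Matrix (Fin n) (Fin n) ℂ) (z : ℂ) (hz : z.re < 0)
    (w : Fin n → ℂ) (k : ℕ)
    (hk : ((G - z • (1 : Matrix (Fin n) (Fin n) ℂ)) ^ k).mulVec w = 0) :
    ∃ lam > (0 : ℝ), ∃ K : ℝ, 0 ≤ K ∧ ∀ t : ℝ, 0 ≤ t →
      ‖(NormedSpace.exp (t • G)).mulVec w‖ ≤ K * Real.exp (-lam * t) := by
  set N := G - z • (1 : Matrix (Fin n) (Fin n) ℂ) with hN
  obtain ⟨a, ha, haz⟩ : ∃ a : ℝ, 0 < a ∧ z.re = -a - a := ⟨-z.re / 2, by linarith, by ring⟩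
  refine ⟨a, ha, ∑ j ∈ Finset.range k, (a ^ j)⁻¹ * ‖(N ^ j).mulVec w‖, by positivity, ?_⟩
  intro t ht
  rw [aux_exp_gen G z w k hk t, norm_smul, Complex.norm_exp]
  have hre : ((t : ℂ) * z).re = -a * t + -(a * t) := by
    simp [haz]; ring
  rw [hre, Real.exp_add, mul_assoc, mul_comm]
  gcongr
  calc _ ≤ Real.exp (-(a * t)) * ∑ j ∈ Finset.range k, Real.exp (a * t) *
        ((a ^ j)⁻¹ * ‖(N ^ j).mulVec w‖) := by
        gcongr
        refine (norm_sum_le _ _).trans (Finset.sum_le_sum fun j _ => ?_)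
        rw [norm_smul, ← mul_assoc]
        gcongr
        have h := Real.pow_div_factorial_le_exp (a * t) (by positivity) j
        have h0 : ‖((j.factorial : ℂ)⁻¹ * (t : ℂ) ^ j)‖ = (j.factorial : ℝ)⁻¹ * t ^ j := by
          simp [abs_of_nonneg ht]
        rw [h0]
        calc (j.factorial : ℝ)⁻¹ * t ^ j = (a * t) ^ j / j.factorial * (a ^ j)⁻¹ := by
              rw [mul_pow]; field_simp
          _ ≤ _ := by gcongr
    _ = _ := by
        rw [← Finset.mul_sum, ← mul_assoc, ← Real.exp_add]
        simp

lemma aux_mem_spectrum {n : ℕ} (G : Matrix (Fin n) (Fin n) ℂ) (z : ℂ)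
    (w : Fin n → ℂ) (h0 : w ≠ 0) (k : ℕ)
    (hk : ((G - z • (1 : Matrix (Fin n) (Fin n) ℂ)) ^ k).mulVec w = 0) :
    z ∈ spectrum ℂ G := by
  by_contra hz
  rw [spectrum.notMem_iff, Algebra.algebraMap_eq_smul_one] at hz
  have h1 : IsUnit (G - z • (1 : Matrix (Fin n) (Fin n) ℂ)) := by
    rw [← neg_sub]
    exact hz.neg
  obtain ⟨U, hU⟩ := h1.pow k
  apply h0
  have h2 : ((U⁻¹ : (Matrix (Fin n) (Fin n) ℂ)ˣ) : Matrix (Fin n) (Fin n) ℂ).mulVec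
      ((U : Matrix (Fin n) (Fin n) ℂ).mulVec w) = w := by
    rw [Matrix.mulVec_mulVec, Units.inv_mul, Matrix.one_mulVec]
  rw [← h2, hU, hk, Matrix.mulVec_zero]

/-- Exponential decay of every trajectory when the spectrum is in the open left half plane. -/
lemma aux_decay {n : ℕ} (G : Matrix (Fin n) (Fin n) ℂ)
    (hG : ∀ z ∈ spectrum ℂ G, z.re < 0) (w : Fin n → ℂ) :
    ∃ lam > (0 : ℝ), ∃ K : ℝ, 0 ≤ K ∧ ∀ t : ℝ, 0 ≤ t →
      ‖(NormedSpace.exp (t • G)).mulVec w‖ ≤ K * Real.exp (-lam * t) := by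
  let S : Submodule ℂ (Fin n → ℂ) :=
    { carrier := {w | ∃ lam > (0 : ℝ), ∃ K : ℝ, 0 ≤ K ∧ ∀ t : ℝ, 0 ≤ t →
        ‖(NormedSpace.exp (t • G)).mulVec w‖ ≤ K * Real.exp (-lam * t)}
      zero_mem' := ⟨1, one_pos, 0, le_rfl, fun t _ => by simp⟩
      add_mem' := by
        rintro v w ⟨l, hl, K, hK, h⟩ ⟨l', hl', K', hK', h'⟩
        refine ⟨min l l', lt_min hl hl', K + K', by positivity, fun t ht => ?_⟩
        rw [Matrix.mulVec_add, add_mul]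
        refine (norm_add_le _ _).trans (add_le_add ((h t ht).trans ?_) ((h' t ht).trans ?_))
        · gcongr
          exact min_le_left _ _
        · gcongr
          exact min_le_right _ _
      smul_mem' := by
        rintro c w ⟨l, hl, K, hK, h⟩
        refine ⟨l, hl, ‖c‖ * K, by positivity, fun t ht => ?_⟩
        rw [Matrix.mulVec_smul, norm_smul, mul_assoc]
        gcongr
        exact h t ht }
  have hS : S = ⊤ := by
    rw [eq_top_iff, ← Module.End.iSup_maxGenEigenspace_eq_top (Matrix.toLin' G)]
    refine iSup_le fun z w hw => ?_
    by_cases h0 : w = 0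
    · rw [h0]; exact S.zero_mem
    obtain ⟨k, hk⟩ := (Module.End.mem_maxGenEigenspace _ _ _).1 hw
    have e : Matrix.toLin' G - z • 1 = Matrix.toLin' (G - z • 1) := by
      ext; simp [Matrix.toLin'_one]
    rw [e, ← Matrix.toLin'_pow, Matrix.toLin'_apply] at hk
    exact aux_decay_gen G z (hG z (aux_mem_spectrum G z w h0 k hk)) w k hk
  have : w ∈ S := hS ▸ Submodule.mem_top
  exact this

lemma aux_map_exp {n : ℕ} (F : Matrix (Fin n) (Fin n) ℝ) (t : ℝ) :
    (NormedSpace.exp (t • F)).map (Complex.ofReal : ℝ → ℂ) =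
      NormedSpace.exp (t • F.map (Complex.ofReal : ℝ → ℂ)) := by
  open scoped Matrix.Norms.Operator in
  have h := NormedSpace.map_exp (Complex.ofRealHom.mapMatrix (m := Fin n))
    (by
      change Continuous fun X : Matrix (Fin n) (Fin n) ℝ => X.map (Complex.ofReal : ℝ → ℂ)
      exact continuous_id.matrix_map Complex.continuous_ofReal) (t • F)
  have e : Complex.ofRealHom.mapMatrix (t • F) = t • F.map (Complex.ofReal : ℝ → ℂ) := by
    ext i j; simp
  rw [e] at h
  exact h

open scoped Matrix.Norms.Operator in
lemma aux_ode {n : ℕ} (F : Matrix (Fin n) (Fin n) ℝ) (β : ℝ → Fin n → ℝ)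
    (h : ∀ t, 0 ≤ t → ∀ i, HasDerivAt (fun s => β s i) (F.mulVec (β t) i) t)
    (t : ℝ) (ht : 0 ≤ t) : β t = (NormedSpace.exp (t • F)).mulVec (β 0) := by
  have hβ : ∀ t, 0 ≤ t → HasDerivAt β (F.mulVec (β t)) t := fun t ht =>
    hasDerivAt_pi.2 (h t ht)
  have hE : ∀ t : ℝ, HasDerivAt (fun s : ℝ => (NormedSpace.exp (s • F)).mulVec (β 0))
      (F.mulVec ((NormedSpace.exp (t • F)).mulVec (β 0))) t := by
    intro t
    have h1 := hasDerivAt_exp_smul_const' (𝕂 := ℝ) F t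
    let φ : Matrix (Fin n) (Fin n) ℝ →L[ℝ] (Fin n → ℝ) :=
      LinearMap.toContinuousLinearMap ((Matrix.mulVecBilin ℝ ℝ).flip (β 0))
    have h2 := φ.hasFDerivAt.comp_hasDerivAt t h1
    rw [Matrix.mulVec_mulVec]
    exact h2
  let Fc : (Fin n → ℝ) →L[ℝ] (Fin n → ℝ) := LinearMap.toContinuousLinearMap (Matrix.mulVecLin F)
  have := ODE_solution_unique (v := fun _ x => F.mulVec x) (K := ‖Fc‖₊) (a := 0) (b := t)
    (f := β) (g := fun s : ℝ => (NormedSpace.exp (s • F)).mulVec (β 0))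
    (fun _ => Fc.lipschitz)
    (fun s hs => (hβ s hs.1).continuousAt.continuousWithinAt)
    (fun s hs => (hβ s hs.1).hasDerivWithinAt)
    (fun s hs => (hE s).continuousAt.continuousWithinAt)
    (fun s hs => (hE s).hasDerivWithinAt)
    (by simp)
  exact this ⟨ht, le_rfl⟩

lemma aux_rowKron {n k : ℕ} (y : Fin k → ℝ) (X : Matrix (Fin n) (Fin k) ℝ) :
    (rowKron y (1 : Matrix (Fin n) (Fin n) ℝ)).mulVec (mvec X) = X.mulVec y := by
  ext i
  simp [rowKron, mvec, Matrix.mulVec, dotProduct, Fintype.sum_prod_type, Matrix.one_apply, mul_comm]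

lemma aux_euclNorm_le {n : ℕ} (v : Fin n → ℝ) (R : ℝ) (hR : 0 ≤ R) (h : ∀ i, |v i| ≤ R) :
    euclNorm v ≤ Real.sqrt n * R := by
  unfold euclNorm
  have : ∑ i, v i ^ 2 ≤ n * R ^ 2 := by
    calc ∑ i, v i ^ 2 ≤ ∑ _i : Fin n, R ^ 2 :=
          Finset.sum_le_sum fun i _ => sq_le_sq' (neg_le_of_abs_le (h i)) (le_of_abs_le (h i))
      _ = _ := by simp
  calc _ ≤ Real.sqrt (n * R ^ 2) := Real.sqrt_le_sqrt this
    _ = _ := by rw [Real.sqrt_mul (by positivity), Real.sqrt_sq hR]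

/-- Corollary 1 in the paper: the transverse coordinate.
With `F` Hurwitz, `T` invertible, `F·T = T·(A − L·C)` and `θ := [vec(T·L); vec(T·B)]`,
the transverse coordinate `β(t) := T·x(t) − M(t)·θ` satisfies `β' = F·β` on `t ≥ 0`,
hence `β(t) = exp(Ft)·β(0)`, and `‖β(t)‖ ≤ c·e^{−λt}·‖β(0)‖` for some `c, λ > 0`. -/
theorem stmt2 {n m p : ℕ}
    (A : Matrix (Fin n) (Fin n) ℝ) (B : Matrix (Fin n) (Fin m) ℝ)
    (C : Matrix (Fin p) (Fin n) ℝ)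
    (F : Matrix (Fin n) (Fin n) ℝ) (hHur : IsHurwitz F)
    (L : Matrix (Fin n) (Fin p) ℝ)
    (T : Matrix (Fin n) (Fin n) ℝ) (hT : IsUnit T)
    (hFT : F * T = T * (A - L * C))
    (θ : Kix n m p → ℝ) (hθ : θ = Sum.elim (mvec (T * L)) (mvec (T * B)))
    (u : ℝ → Fin m → ℝ) (x : ℝ → Fin n → ℝ) (M : ℝ → Matrix (Fin n) (Kix n m p) ℝ)
    (hx : ∀ t, 0 ≤ t → ∀ i, HasDerivAt (fun s => x s i)
        ((A.mulVec (x t) + B.mulVec (u t)) i) t)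
    (hM : ∀ t, 0 ≤ t → ∀ i j, HasDerivAt (fun s => M s i j)
        ((F * M t + regressor n (C.mulVec (x t)) (u t)) i j) t)
    (β : ℝ → Fin n → ℝ) (hβ : ∀ t, β t = T.mulVec (x t) - (M t).mulVec θ) :
    (∀ t, 0 ≤ t → ∀ i, HasDerivAt (fun s => β s i) (F.mulVec (β t) i) t) ∧
    (∀ t, 0 ≤ t → β t = (NormedSpace.exp (t • F)).mulVec (β 0)) ∧
    (∃ c > (0 : ℝ), ∃ lam > (0 : ℝ), ∀ t, 0 ≤ t →
      euclNorm (β t) ≤ c * Real.exp (-lam * t) * euclNorm (β 0)) := by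
  have hd : ∀ t, 0 ≤ t → ∀ i, HasDerivAt (fun s => β s i) (F.mulVec (β t) i) t := by
    intro t ht i
    have h1 : HasDerivAt (fun s => T.mulVec (x s) i)
        (T.mulVec (A.mulVec (x t) + B.mulVec (u t)) i) t := by
      simp only [Matrix.mulVec, dotProduct]
      exact HasDerivAt.fun_sum fun j _ => (hx t ht j).const_mul _
    have h2 : HasDerivAt (fun s => (M s).mulVec θ i)
        ((F * M t + regressor n (C.mulVec (x t)) (u t)).mulVec θ i) t := by
      change HasDerivAt (fun s => ∑ j, M s i j * θ j)
        (∑ j, (F * M t + regressor n (C.mulVec (x t)) (u t)) i j * θ j) t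
      exact HasDerivAt.fun_sum fun j _ => (hM t ht i j).mul_const _
    have h3 := h1.sub h2
    have e1 : (fun s => β s i) = (fun s => T.mulVec (x s) i) - fun s => (M s).mulVec θ i := by
      funext s; simp [hβ]
    have e2 : F.mulVec (β t) = T.mulVec (A.mulVec (x t) + B.mulVec (u t)) -
        (F * M t + regressor n (C.mulVec (x t)) (u t)).mulVec θ := by
      have e3 : (regressor n (C.mulVec (x t)) (u t)).mulVec θ =
          (T * L).mulVec (C.mulVec (x t)) + (T * B).mulVec (u t) := by
        rw [hθ, regressor, Matrix.fromCols_mulVec]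
        simp [aux_rowKron]
      rw [hβ, Matrix.add_mulVec, e3, Matrix.mulVec_sub, Matrix.mulVec_mulVec, hFT]
      simp only [Matrix.mulVec_add, Matrix.mulVec_mulVec, Matrix.mul_sub, Matrix.sub_mulVec,
        Matrix.mul_assoc]
      abel
    rw [e1, e2]
    exact h3
  have he := aux_ode F β hd
  refine ⟨hd, he, ?_⟩
  obtain ⟨lam, hl, K, hK, hdec⟩ := aux_decay (F.map (Complex.ofReal : ℝ → ℂ)) hHur
    (fun i => (β 0 i : ℂ))
  have hb : ∀ t, 0 ≤ t → ∀ i, |β t i| ≤ K * Real.exp (-lam * t) := by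
    intro t ht i
    have h1 : (fun i => (β t i : ℂ)) =
        (NormedSpace.exp (t • F.map (Complex.ofReal : ℝ → ℂ))).mulVec (fun i => (β 0 i : ℂ)) := by
      rw [he t ht, ← aux_map_exp]
      funext i
      simp [Matrix.mulVec, dotProduct]
    have h2 := (norm_le_pi_norm (fun i => (β t i : ℂ)) i).trans (h1 ▸ hdec t ht)
    simpa using h2
  by_cases h0 : euclNorm (β 0) = 0
  · have hz : β 0 = 0 := by
      unfold euclNorm at h0
      rw [Real.sqrt_eq_zero (by positivity), Finset.sum_eq_zero_iff_of_nonneg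
        (fun _ _ => by positivity)] at h0
      funext i
      simpa using h0 i
    refine ⟨1, one_pos, 1, one_pos, fun t ht => ?_⟩
    rw [he t ht, hz]
    simp [euclNorm]
  · have hp : 0 < euclNorm (β 0) := lt_of_le_of_ne (Real.sqrt_nonneg _) (Ne.symm h0)
    refine ⟨(Real.sqrt n * K + 1) / euclNorm (β 0), by positivity, lam, hl, fun t ht => ?_⟩
    refine (aux_euclNorm_le _ _ (by positivity) (hb t ht)).trans ?_
    have : (Real.sqrt n * K + 1) / euclNorm (β 0) * Real.exp (-lam * t) * euclNorm (β 0) =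
        (Real.sqrt n * K + 1) * Real.exp (-lam * t) := by
      field_simp
    rw [this]
    nlinarith [Real.exp_pos (-lam * t)]
end

section
/- Let A ∈ ℝ^{n×n}, B ∈ ℝ^{n×m}, C ∈ ℝ^{p×n}, μ := (p+m)·n, F ∈ ℝ^{n×n}, L ∈ ℝ^{n×p}, and let T ∈ ℝ^{n×n} be invertible with F·T = T·(A − L·C). Define θ := [vec(T·L); vec(T·B)] ∈ ℝ^{μ}. Let x : ℝ → ℝ^n be differentiable with x'(t) = A·x(t) + B·u(t) for all t ≥ 0, let y(t) := C·x(t), and let M : ℝ → ℝ^{n×μ} be differentiable with M'(t) = F·M(t) + [y(t)^⊤ ⊗ I_n , u(t)^⊤ ⊗ I_n] for all t ≥ 0. If T·x(0) = M(0)·θ, then T·x(t) = M(t)·θ for all t ≥ 0 (i.e., the set 𝒜 = {(x, M) : T·x = M·θ} is invariant). -/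
open Matrix Filter
open scoped Kronecker

/-- The regressor applied to `θ`. -/
theorem regressor_mulVec_theta {n m p : ℕ} (P : Matrix (Fin n) (Fin p) ℝ)
    (Q : Matrix (Fin n) (Fin m) ℝ) (y : Fin p → ℝ) (u : Fin m → ℝ) :
    (regressor n y u).mulVec (Sum.elim (mvec P) (mvec Q)) = P.mulVec y + Q.mulVec u := by
  ext i
  simp only [regressor, Matrix.mulVec, dotProduct, Fintype.sum_sum_type, Fintype.sum_prod_type,
    Matrix.fromCols_apply_inl, Matrix.fromCols_apply_inr, Sum.elim_inl, Sum.elim_inr, Pi.add_apply,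
    rowKron, mvec, Matrix.submatrix_apply, Matrix.kroneckerMap_apply, Matrix.of_apply, id]
  simp [Matrix.one_apply, mul_comm]

/-- invariance of the set `𝒜 = {(x, M) : T·x = M·θ}`.
With `T` invertible, `F·T = T·(A − L·C)` and `θ := [vec(T·L); vec(T·B)]`, if
`T·x(0) = M(0)·θ` then `T·x(t) = M(t)·θ` for all `t ≥ 0`. -/
theorem stmt3 {n m p : ℕ}
    (A : Matrix (Fin n) (Fin n) ℝ) (B : Matrix (Fin n) (Fin m) ℝ)
    (C : Matrix (Fin p) (Fin n) ℝ)
    (F : Matrix (Fin n) (Fin n) ℝ) (L : Matrix (Fin n) (Fin p) ℝ)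
    (T : Matrix (Fin n) (Fin n) ℝ) (hT : IsUnit T)
    (hFT : F * T = T * (A - L * C))
    (θ : Kix n m p → ℝ) (hθ : θ = Sum.elim (mvec (T * L)) (mvec (T * B)))
    (u : ℝ → Fin m → ℝ) (x : ℝ → Fin n → ℝ) (M : ℝ → Matrix (Fin n) (Kix n m p) ℝ)
    (hx : ∀ t, 0 ≤ t → ∀ i, HasDerivAt (fun s => x s i)
        ((A.mulVec (x t) + B.mulVec (u t)) i) t)
    (hM : ∀ t, 0 ≤ t → ∀ i j, HasDerivAt (fun s => M s i j)
        ((F * M t + regressor n (C.mulVec (x t)) (u t)) i j) t)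
    (h0 : T.mulVec (x 0) = (M 0).mulVec θ) :
    ∀ t, 0 ≤ t → T.mulVec (x t) = (M t).mulVec θ := by
  have hd : ∀ t, 0 ≤ t → HasDerivAt (fun s => T.mulVec (x s) - (M s).mulVec θ)
      (F.mulVec (T.mulVec (x t) - (M t).mulVec θ)) t := by
    intro t ht
    have key : F.mulVec (T.mulVec (x t) - (M t).mulVec θ)
        = T.mulVec (A.mulVec (x t) + B.mulVec (u t))
          - (F * M t + regressor n (C.mulVec (x t)) (u t)).mulVec θ := by
      have hr := regressor_mulVec_theta (T * L) (T * B) (C.mulVec (x t)) (u t)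
      rw [← hθ] at hr
      rw [Matrix.add_mulVec, hr, Matrix.mulVec_sub, Matrix.mulVec_mulVec, hFT, Matrix.mul_sub,
        Matrix.sub_mulVec, Matrix.mulVec_add]
      simp only [Matrix.mulVec_mulVec, Matrix.mul_assoc]
      abel
    rw [key, hasDerivAt_pi]
    intro i
    have h1 : HasDerivAt (fun s => ∑ j, T i j * x s j)
        (∑ j, T i j * (A.mulVec (x t) + B.mulVec (u t)) j) t :=
      HasDerivAt.fun_sum fun j _ => (hx t ht j).const_mul _
    have h2 : HasDerivAt (fun s => ∑ j, M s i j * θ j)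
        (∑ j, (F * M t + regressor n (C.mulVec (x t)) (u t)) i j * θ j) t :=
      HasDerivAt.fun_sum fun j _ => (hM t ht i j).mul_const _
    exact h1.sub h2
  intro t ht
  have hz := ODE_solution_unique (v := fun _ e => LinearMap.toContinuousLinearMap F.mulVecLin e)
    (f := fun s => T.mulVec (x s) - (M s).mulVec θ) (g := fun _ => 0) (a := 0) (b := t)
    (fun _ => (LinearMap.toContinuousLinearMap F.mulVecLin).lipschitz)
    (fun s hs => (hd s hs.1).continuousAt.continuousWithinAt)
    (fun s hs => (hd s hs.1).hasDerivWithinAt)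
    continuousOn_const
    (fun s _ => by simpa using hasDerivWithinAt_const s (Set.Ici s) (0 : Fin n → ℝ))
    (by simp [h0]) (Set.right_mem_Icc.2 ht)
  exact sub_eq_zero.1 hz
end

section
/- Let A ∈ ℝ^{n×n}, B ∈ ℝ^{n×m}, C ∈ ℝ^{p×n}, μ := (p+m)·n, F ∈ ℝ^{n×n}, L ∈ ℝ^{n×p}, and let T ∈ ℝ^{n×n} be invertible with F·T = T·(A − L·C). Define θ := [vec(T·L); vec(T·B)] ∈ ℝ^{μ}, Π := θ^⊤ ⊗ T^{−1} ∈ ℝ^{n×nμ}, F_ξ := I_μ ⊗ F, B_ξ := [0_{pn²×m}; I_m ⊗ vec(I_n)], L_ξ := [I_p ⊗ vec(I_n); 0_{mn²×p}], C_ξ := C·Π, and A_ξ := F_ξ + L_ξ·C_ξ. Then the non-minimal realization equations hold: Π·F_ξ = (A − L·C)·Π, Π·L_ξ = L, Π·B_ξ = B, and consequently Π·A_ξ = A·Π. -/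
open Matrix Filter
open scoped Kronecker

/-- the non-minimal realization equations, cf. Lemma 3.
With `θ := [vec(T·L); vec(T·B)]`, `Pim := θᵀ ⊗ T⁻¹`, `F_ξ := I_μ ⊗ F`,
`C_ξ := C·Pim`, `A_ξ := F_ξ + L_ξ·C_ξ`, one has
`Pim·F_ξ = (A − L·C)·Pim`, `Pim·L_ξ = L`, `Pim·B_ξ = B` and `Pim·A_ξ = A·Pim`. -/
theorem stmt6 {n m p : ℕ}
    (A : Matrix (Fin n) (Fin n) ℝ) (B : Matrix (Fin n) (Fin m) ℝ)
    (C : Matrix (Fin p) (Fin n) ℝ)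
    (F : Matrix (Fin n) (Fin n) ℝ) (L : Matrix (Fin n) (Fin p) ℝ)
    (T : Matrix (Fin n) (Fin n) ℝ) (hT : IsUnit T)
    (hFT : F * T = T * (A - L * C))
    (θ : Kix n m p → ℝ) (hθ : θ = Sum.elim (mvec (T * L)) (mvec (T * B)))
    (Pim : Matrix (Fin n) (Kix n m p × Fin n) ℝ) (hPim : Pim = rowKron θ T⁻¹)
    (Cξ : Matrix (Fin p) (Kix n m p × Fin n) ℝ) (hCξ : Cξ = C * Pim)
    (Aξ : Matrix (Kix n m p × Fin n) (Kix n m p × Fin n) ℝ)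
    (hAξ : Aξ = Fxi F + Lxi n m p * Cξ) :
    Pim * Fxi F = (A - L * C) * Pim ∧
    Pim * Lxi n m p = L ∧
    Pim * Bxi n m p = B ∧
    Pim * Aξ = A * Pim := by
  have hdet : IsUnit T.det := (Matrix.isUnit_iff_isUnit_det T).mp hT
  have hP : ∀ i k a, Pim i (k, a) = θ k * T⁻¹ i a := by
    intro i k a
    rw [hPim]
    simp [rowKron, Matrix.kroneckerMap_apply]
  have hinv : T⁻¹ * F = (A - L * C) * T⁻¹ := by
    calc T⁻¹ * F = T⁻¹ * (F * T) * T⁻¹ := by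
          rw [Matrix.mul_assoc, Matrix.mul_nonsing_inv_cancel_right T F hdet]
      _ = (A - L * C) * T⁻¹ := by
          rw [hFT, Matrix.nonsing_inv_mul_cancel_left T _ hdet]
  have h1 : Pim * (Fxi F : Matrix (Kix n m p × Fin n) (Kix n m p × Fin n) ℝ) = (A - L * C) * Pim := by
    ext i ⟨k, a⟩
    have h := congrFun (congrFun hinv i) a
    rw [Matrix.mul_apply, Matrix.mul_apply] at h
    have e1 : (Pim * (Fxi F : Matrix (Kix n m p × Fin n) (Kix n m p × Fin n) ℝ)) i (k, a)
        = θ k * ∑ b, T⁻¹ i b * F b a := by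
      rw [Matrix.mul_apply, Fintype.sum_prod_type, Finset.sum_eq_single k]
      · simp [hP, Fxi, Matrix.kroneckerMap_apply, Finset.mul_sum, mul_assoc]
      · intro k' _ hk
        simp [Fxi, Matrix.kroneckerMap_apply, Matrix.one_apply_ne hk]
      · simp
    rw [e1, h, Matrix.mul_apply, Finset.mul_sum]
    refine Finset.sum_congr rfl fun b _ => ?_
    rw [hP]
    ring
  have h2 : Pim * Lxi n m p = L := by
    ext i j
    have h := congrFun (congrFun (Matrix.nonsing_inv_mul_cancel_left T L hdet) i) j
    rw [← h, Matrix.mul_apply, Matrix.mul_apply, Fintype.sum_prod_type]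
    simp [hP, hθ, Lxi, mvec, Fintype.sum_prod_type, Matrix.one_apply, mul_comm]
  have h3 : Pim * Bxi n m p = B := by
    ext i j
    have h := congrFun (congrFun (Matrix.nonsing_inv_mul_cancel_left T B hdet) i) j
    rw [← h, Matrix.mul_apply, Matrix.mul_apply, Fintype.sum_prod_type]
    simp [hP, hθ, Bxi, mvec, Fintype.sum_prod_type, Matrix.one_apply, mul_comm]
  refine ⟨h1, h2, h3, ?_⟩
  rw [hAξ, hCξ, Matrix.mul_add, h1, ← Matrix.mul_assoc, h2, Matrix.sub_mul,
    Matrix.mul_assoc, sub_add_cancel]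
end

section
/- Let A ∈ ℝ^{n×n}, B ∈ ℝ^{n×m}, C ∈ ℝ^{p×n} with (A, B) controllable (rank [B, AB, …, A^{n−1}B] = n) and (C, A) observable (rank [C; CA; …; CA^{n−1}] = n). Let μ := (p+m)·n, let F ∈ ℝ^{n×n} be Hurwitz with n distinct real eigenvalues, let L ∈ ℝ^{n×p} and T ∈ ℝ^{n×n} invertible satisfy F·T = T·(A − L·C), and define θ := [vec(T·L); vec(T·B)], Π := θ^⊤ ⊗ T^{−1}, F_ξ := I_μ ⊗ F, B_ξ := [0_{pn²×m}; I_m ⊗ vec(I_n)], L_ξ := [I_p ⊗ vec(I_n); 0_{mn²×p}], C_ξ := C·Π, A_ξ := F_ξ + L_ξ·C_ξ. Then the pair (A_ξ, B_ξ) is stabilizable: for every λ ∈ ℂ with Re λ ≥ 0, the complex matrix [λ·I_{nμ} − A_ξ , B_ξ] has rank nμ. -/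
open Matrix Filter
open scoped Kronecker

/-- Full row rank gives injectivity of `v ↦ v ᵥ* M`. -/
theorem aux_inj_of_rank {n : ℕ} {K : Type*} [Fintype K] (M : Matrix (Fin n) K ℝ)
    (h : M.rank = n) (v : Fin n → ℝ) (hv : v ᵥ* M = 0) : v = 0 := by
  have hli : LinearIndependent ℝ M.row := by
    rw [linearIndependent_iff_card_eq_finrank_span, Fintype.card_fin, Set.finrank,
      ← Matrix.rank_eq_finrank_span_row, h]
  have hinj := Matrix.vecMul_injective_iff.mpr hli
  exact hinj (by simpa using hv)

/-- Injectivity of `v ↦ v ᵥ* M` gives full row rank. -/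
theorem aux_rank_of_inj {N K : Type*} [Fintype N] [Fintype K] (M : Matrix N K ℂ)
    (h : ∀ w : N → ℂ, w ᵥ* M = 0 → w = 0) : M.rank = Fintype.card N := by
  have hinj : Function.Injective M.vecMul := by
    intro a b hab
    have := h (a - b) (by rw [Matrix.sub_vecMul]; exact sub_eq_zero.mpr hab)
    exact sub_eq_zero.mp this
  exact (Matrix.vecMul_injective_iff.mp hinj).rank_matrix

/-- Complexified version of `aux_inj_of_rank`. -/
theorem aux_inj_complex {n : ℕ} {K : Type*} [Fintype K] (M : Matrix (Fin n) K ℝ)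
    (h : M.rank = n) (v : Fin n → ℂ)
    (hv : v ᵥ* M.map (Complex.ofReal : ℝ → ℂ) = 0) : v = 0 := by
  have hre : (fun i => (v i).re) = 0 := by
    apply aux_inj_of_rank M h
    funext k
    have := congrArg Complex.re (congrFun hv k)
    simpa [Matrix.vecMul, dotProduct] using this
  have him : (fun i => (v i).im) = 0 := by
    apply aux_inj_of_rank M h
    funext k
    have := congrArg Complex.im (congrFun hv k)
    simpa [Matrix.vecMul, dotProduct] using this
  funext i
  exact Complex.ext (congrFun hre i) (congrFun him i)

/-- The abstract PBH argument. -/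
theorem aux_pbh {n m p N : Type*} [Fintype n] [DecidableEq n] [Fintype m]
    [Fintype p] [Fintype N] [DecidableEq N]
    (A : Matrix n n ℂ) (B : Matrix n m ℂ) (C : Matrix p n ℂ) (L : Matrix n p ℂ)
    (P : Matrix n N ℂ) (Fx : Matrix N N ℂ) (Bx : Matrix N m ℂ) (Lx : Matrix N p ℂ) (z : ℂ)
    (hL : P * Lx = L) (hB : P * Bx = B) (hF : P * Fx = (A - L * C) * P)
    (hu : IsUnit (z • (1 : Matrix N N ℂ) - Fx))
    (hu' : IsUnit (z • (1 : Matrix n n ℂ) - (A - L * C)))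
    (hc : ∀ v : n → ℂ, v ᵥ* A = z • v → v ᵥ* B = 0 → v = 0)
    (w : N → ℂ) (hw : w ᵥ* (z • (1 : Matrix N N ℂ) - (Fx + Lx * (C * P))) = 0)
    (hwB : w ᵥ* Bx = 0) : w = 0 := by
  obtain ⟨v, hv⟩ := (Matrix.vecMul_surjective_iff_isUnit.mpr hu') (w ᵥ* (Lx * C))
  have hv : v ᵥ* (z • (1 : Matrix n n ℂ) - (A - L * C)) = w ᵥ* (Lx * C) := hv
  have h1 : w ᵥ* (z • (1 : Matrix N N ℂ) - Fx) = w ᵥ* (Lx * C) ᵥ* P := by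
    rw [← sub_sub, Matrix.vecMul_sub, sub_eq_zero] at hw
    rw [hw, Matrix.vecMul_vecMul, Matrix.mul_assoc]
  have h2 : v ᵥ* P ᵥ* (z • (1 : Matrix N N ℂ) - Fx) = w ᵥ* (Lx * C) ᵥ* P := by
    rw [← hv, Matrix.vecMul_vecMul, Matrix.vecMul_vecMul, Matrix.mul_sub, hF,
      Matrix.sub_mul (z • (1 : Matrix n n ℂ))]
    simp
  have h3 : w = v ᵥ* P := Matrix.vecMul_injective_of_isUnit hu (h1.trans h2.symm)
  have h4 : v ᵥ* B = 0 := by rw [← hB, ← Matrix.vecMul_vecMul, ← h3, hwB]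
  have h5 : v ᵥ* A = z • v := by
    have h6 : w ᵥ* (Lx * C) = v ᵥ* (L * C) := by
      rw [h3, Matrix.vecMul_vecMul, ← Matrix.mul_assoc, hL]
    rw [h6, Matrix.vecMul_sub, Matrix.vecMul_sub, Matrix.vecMul_smul, Matrix.vecMul_one] at hv
    have h7 : z • v - v ᵥ* A = 0 := by
      have := sub_eq_zero.mpr hv
      rw [← this]; abel
    exact (sub_eq_zero.mp h7).symm
  rw [h3, hc v h5 h4, Matrix.zero_vecMul]

theorem aux_mul_Lxi {n m p : ℕ} (L : Matrix (Fin n) (Fin p) ℝ) (B : Matrix (Fin n) (Fin m) ℝ)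
    (T : Matrix (Fin n) (Fin n) ℝ) (hT : IsUnit T) :
    rowKron (Sum.elim (mvec (T * L)) (mvec (T * B))) T⁻¹ * Lxi n m p = L := by
  have h : L = T⁻¹ * (T * L) := by
    rw [← Matrix.mul_assoc, Matrix.nonsing_inv_mul _ ((Matrix.isUnit_iff_isUnit_det _).mp hT),
      Matrix.one_mul]
  conv_rhs => rw [h]
  ext i j
  rw [Matrix.mul_apply, Matrix.mul_apply]
  simp [rowKron, mvec, Lxi, Fintype.sum_prod_type, Fintype.sum_sum_type, Matrix.one_apply,
    Finset.sum_ite_eq, mul_comm]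

theorem aux_mul_Bxi {n m p : ℕ} (L : Matrix (Fin n) (Fin p) ℝ) (B : Matrix (Fin n) (Fin m) ℝ)
    (T : Matrix (Fin n) (Fin n) ℝ) (hT : IsUnit T) :
    rowKron (Sum.elim (mvec (T * L)) (mvec (T * B))) T⁻¹ * Bxi n m p = B := by
  have h : B = T⁻¹ * (T * B) := by
    rw [← Matrix.mul_assoc, Matrix.nonsing_inv_mul _ ((Matrix.isUnit_iff_isUnit_det _).mp hT),
      Matrix.one_mul]
  conv_rhs => rw [h]
  ext i j
  rw [Matrix.mul_apply, Matrix.mul_apply]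
  simp [rowKron, mvec, Bxi, Fintype.sum_prod_type, Fintype.sum_sum_type, Matrix.one_apply,
    Finset.sum_ite_eq, mul_comm]

theorem aux_mul_Fxi {n m p : ℕ} (θ : Kix n m p → ℝ) (S F G : Matrix (Fin n) (Fin n) ℝ)
    (h : S * F = G * S) : rowKron θ S * Fxi (m := m) (p := p) F = G * rowKron θ S := by
  ext i ⟨k, j⟩
  have h1 := congrFun (congrFun h i) j
  rw [Matrix.mul_apply, Matrix.mul_apply] at h1
  have h2 : (rowKron θ S * Fxi (m := m) (p := p) F) i (k, j) = θ k * ∑ x, S i x * F x j := by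
    rw [Matrix.mul_apply, Fintype.sum_prod_type, Finset.sum_eq_single k]
    · simp [rowKron, Fxi, Finset.mul_sum, mul_assoc]
    · intro b _ hb
      simp [rowKron, Fxi, Matrix.one_apply, hb]
    · simp
  rw [h2, h1, Matrix.mul_apply, Finset.mul_sum]
  refine Finset.sum_congr rfl fun x _ => ?_
  simp [rowKron]; ring

theorem aux_unit_Fxi {n m p : ℕ} (F : Matrix (Fin n) (Fin n) ℝ) (z : ℂ)
    (h : IsUnit (z • (1 : Matrix (Fin n) (Fin n) ℂ) - F.map (Complex.ofReal : ℝ → ℂ))) :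
    IsUnit (z • (1 : Matrix (Kix n m p × Fin n) (Kix n m p × Fin n) ℂ) -
      (Fxi (m := m) (p := p) F).map (Complex.ofReal : ℝ → ℂ)) := by
  have e : z • (1 : Matrix (Kix n m p × Fin n) (Kix n m p × Fin n) ℂ) -
      (Fxi (m := m) (p := p) F).map (Complex.ofReal : ℝ → ℂ) =
      (1 : Matrix (Kix n m p) (Kix n m p) ℂ) ⊗ₖ
        (z • (1 : Matrix (Fin n) (Fin n) ℂ) - F.map (Complex.ofReal : ℝ → ℂ)) := by
    ext ⟨k, i⟩ ⟨l, j⟩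
    by_cases hkl : k = l <;> simp [Fxi, Matrix.one_apply, hkl]
  rw [e, Matrix.isUnit_iff_isUnit_det, Matrix.det_kronecker]
  rw [Matrix.isUnit_iff_isUnit_det] at h
  rw [Matrix.det_one, one_pow, one_mul]
  exact h.pow _

/-- Lemma 3 in the paper: stabilizability of the canonical
non-minimal realization. With `(A, B)` controllable, `(C, A)` observable, `F` Hurwitz
with `n` distinct real eigenvalues, `F·T = T·(A − L·C)` with `T` invertible,
`θ := [vec(T·L); vec(T·B)]`, `Pi := θᵀ ⊗ T⁻¹`, `C_ξ := C·Pi` and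
`A_ξ := (I_μ ⊗ F) + L_ξ·C_ξ`, the pair `(A_ξ, B_ξ)` is stabilizable (PBH test). -/
theorem stmt7 {n m p : ℕ}
    (A : Matrix (Fin n) (Fin n) ℝ) (B : Matrix (Fin n) (Fin m) ℝ)
    (C : Matrix (Fin p) (Fin n) ℝ)
    (hctrb : (Matrix.of fun i : Fin n => fun q : Fin n × Fin m =>
      (A ^ (q.1 : ℕ) * B) i q.2).rank = n)
    (hobs : (Matrix.of fun q : Fin n × Fin p => fun j : Fin n =>
      (C * A ^ (q.1 : ℕ)) q.2 j).rank = n)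
    (F : Matrix (Fin n) (Fin n) ℝ) (hHur : IsHurwitz F)
    (hreal : (F.charpoly.roots).card = n)
    (hdist : (F.charpoly.roots).Nodup)
    (L : Matrix (Fin n) (Fin p) ℝ)
    (T : Matrix (Fin n) (Fin n) ℝ) (hT : IsUnit T)
    (hFT : F * T = T * (A - L * C))
    (θ : Kix n m p → ℝ) (hθ : θ = Sum.elim (mvec (T * L)) (mvec (T * B)))
    (Pim : Matrix (Fin n) (Kix n m p × Fin n) ℝ) (hPim : Pim = rowKron θ T⁻¹)
    (Cξ : Matrix (Fin p) (Kix n m p × Fin n) ℝ) (hCξ : Cξ = C * Pim)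
    (Aξ : Matrix (Kix n m p × Fin n) (Kix n m p × Fin n) ℝ)
    (hAξ : Aξ = Fxi F + Lxi n m p * Cξ) :
    IsStabilizable Aξ (Bxi n m p) := by
  subst hAξ hCξ hPim hθ
  intro z hz
  apply aux_rank_of_inj
  intro w hw
  rw [Matrix.vecMul_fromCols] at hw
  have hw1 : w ᵥ* (z • (1 : Matrix (Kix n m p × Fin n) (Kix n m p × Fin n) ℂ) - _) = 0 :=
    funext fun i => congrFun hw (Sum.inl i)
  have hw2 : w ᵥ* ((Bxi n m p).map (Complex.ofReal : ℝ → ℂ)) = 0 :=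
    funext fun i => congrFun hw (Sum.inr i)
  have hmul : ∀ {a b c : Type} [Fintype b] (X : Matrix a b ℝ) (Y : Matrix b c ℝ),
      (X * Y).map (Complex.ofReal : ℝ → ℂ) =
        X.map (Complex.ofReal : ℝ → ℂ) * Y.map (Complex.ofReal : ℝ → ℂ) := by
    intro a b c _ X Y
    exact Matrix.map_mul (f := Complex.ofRealHom)
  have hTdet := (Matrix.isUnit_iff_isUnit_det _).mp hT
  have hTF : T⁻¹ * F = (A - L * C) * T⁻¹ := by
    calc T⁻¹ * F = T⁻¹ * (F * T) * T⁻¹ := by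
          rw [Matrix.mul_assoc, Matrix.mul_assoc, Matrix.mul_nonsing_inv _ hTdet, Matrix.mul_one]
      _ = _ := by
          rw [hFT, ← Matrix.mul_assoc, Matrix.nonsing_inv_mul _ hTdet, Matrix.one_mul]
  have hsub : (A - L * C).map (Complex.ofReal : ℝ → ℂ) =
      A.map (Complex.ofReal : ℝ → ℂ) -
        L.map (Complex.ofReal : ℝ → ℂ) * C.map (Complex.ofReal : ℝ → ℂ) := by
    rw [← hmul]; ext i j; simp
  have hFu : IsUnit (z • (1 : Matrix (Fin n) (Fin n) ℂ) - F.map (Complex.ofReal : ℝ → ℂ)) := by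
    by_contra hcon
    have hmem : z ∈ spectrum ℂ (F.map (Complex.ofReal : ℝ → ℂ)) := by
      rw [spectrum.mem_iff, Algebra.algebraMap_eq_smul_one]
      exact hcon
    exact absurd (hHur z hmem) (not_lt.mpr hz)
  have hAu : IsUnit (z • (1 : Matrix (Fin n) (Fin n) ℂ) -
      (A.map (Complex.ofReal : ℝ → ℂ) -
        L.map (Complex.ofReal : ℝ → ℂ) * C.map (Complex.ofReal : ℝ → ℂ))) := by
    have hTC : T⁻¹.map (Complex.ofReal : ℝ → ℂ) * T.map (Complex.ofReal : ℝ → ℂ) = 1 := by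
      rw [← hmul, Matrix.nonsing_inv_mul _ hTdet]; ext i j; by_cases hij : i = j <;> simp [Matrix.one_apply, hij]
    have hTC' : T.map (Complex.ofReal : ℝ → ℂ) * T⁻¹.map (Complex.ofReal : ℝ → ℂ) = 1 :=
      mul_eq_one_comm.mp hTC
    have e : z • (1 : Matrix (Fin n) (Fin n) ℂ) -
      (A.map (Complex.ofReal : ℝ → ℂ) -
        L.map (Complex.ofReal : ℝ → ℂ) * C.map (Complex.ofReal : ℝ → ℂ)) =
        T⁻¹.map (Complex.ofReal : ℝ → ℂ) *
          (z • (1 : Matrix (Fin n) (Fin n) ℂ) - F.map (Complex.ofReal : ℝ → ℂ)) *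
          T.map (Complex.ofReal : ℝ → ℂ) := by
      rw [Matrix.mul_sub, ← hmul T⁻¹ F, hTF, hmul _ T⁻¹, Matrix.sub_mul,
        Matrix.mul_assoc _ _ (T.map _), Matrix.mul_assoc _ _ (T.map _), hTC, hsub]
      simp [hTC]
    rw [e]
    exact ((IsUnit.of_mul_eq_one _ hTC).mul hFu).mul (IsUnit.of_mul_eq_one _ hTC')
  refine aux_pbh (A.map (Complex.ofReal : ℝ → ℂ)) (B.map (Complex.ofReal : ℝ → ℂ))
    (C.map (Complex.ofReal : ℝ → ℂ)) (L.map (Complex.ofReal : ℝ → ℂ))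
    ((rowKron (Sum.elim (mvec (T * L)) (mvec (T * B))) T⁻¹).map (Complex.ofReal : ℝ → ℂ))
    ((Fxi F).map (Complex.ofReal : ℝ → ℂ)) ((Bxi n m p).map (Complex.ofReal : ℝ → ℂ))
    ((Lxi n m p).map (Complex.ofReal : ℝ → ℂ)) z ?_ ?_ ?_ (aux_unit_Fxi F z hFu) hAu ?_ w ?_ hw2
  · rw [← hmul, aux_mul_Lxi L B T hT]
  · rw [← hmul, aux_mul_Bxi L B T hT]
  · rw [← hmul, ← hsub, ← hmul, aux_mul_Fxi _ _ _ _ hTF]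
  · intro v hvA hvB
    apply aux_inj_complex _ hctrb v
    have hpow : ∀ k : ℕ, v ᵥ* ((A ^ k * B).map (Complex.ofReal : ℝ → ℂ)) = 0 := by
      intro k
      induction k with
      | zero => simpa using hvB
      | succ k ih =>
        rw [pow_succ', Matrix.mul_assoc, hmul, ← Matrix.vecMul_vecMul, hvA, Matrix.smul_vecMul,
          ih, smul_zero]
    funext q
    exact congrFun (hpow q.1) q.2
  · rw [← hw1]
    congr 2
    rw [← hmul, ← hmul]
    ext i j; simp
end

section
/- Let A ∈ ℝ^{n×n}, B ∈ ℝ^{n×m}, C ∈ ℝ^{p×n}, μ := (p+m)·n, F ∈ ℝ^{n×n}, L ∈ ℝ^{n×p}, and let T ∈ ℝ^{n×n} be invertible with F·T = T·(A − L·C). Define θ := [vec(T·L); vec(T·B)], Π := θ^⊤ ⊗ T^{−1}, F_ξ := I_μ ⊗ F, B_ξ := [0_{pn²×m}; I_m ⊗ vec(I_n)], L_ξ := [I_p ⊗ vec(I_n); 0_{mn²×p}], C_ξ := C·Π, A_ξ := F_ξ + L_ξ·C_ξ. Let x : ℝ → ℝ^n be differentiable with x'(t) = A·x(t) + B·u(t),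 y(t) := C·x(t), and let M : ℝ → ℝ^{n×μ} be differentiable with M'(t) = F·M(t) + [y(t)^⊤ ⊗ I_n , u(t)^⊤ ⊗ I_n] for all t ≥ 0. Define ξ̂(t) := vec(M(t)) and β(t) := T·x(t) − M(t)·θ. Then for all t ≥ 0: ξ̂'(t) = A_ξ·ξ̂(t) + L_ξ·C·T^{−1}·β(t) + B_ξ·u(t). -/
open Matrix Filter
open scoped Kronecker

theorem rowKron_mulVec_mvec {n : ℕ} {K : Type*} [Fintype K] (θ : K → ℝ)
    (S : Matrix (Fin n) (Fin n) ℝ) (X : Matrix (Fin n) K ℝ) :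
    (rowKron θ S).mulVec (mvec X) = S.mulVec (X.mulVec θ) := by
  ext i
  simp only [rowKron, mvec, Matrix.mulVec, dotProduct, Fintype.sum_prod_type,
    Matrix.submatrix_apply, Matrix.kroneckerMap_apply, Matrix.of_apply, id, Finset.mul_sum]
  rw [Finset.sum_comm]
  exact Finset.sum_congr rfl fun a _ => Finset.sum_congr rfl fun b _ => by ring

theorem Fxi_mulVec_mvec {n m p : ℕ} (F : Matrix (Fin n) (Fin n) ℝ)
    (X : Matrix (Fin n) (Kix n m p) ℝ) :
    (Fxi F).mulVec (mvec X) = mvec (F * X) := by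
  ext ⟨k, i⟩
  simp only [Fxi, mvec, Matrix.mulVec, dotProduct, Matrix.kroneckerMap_apply, Matrix.mul_apply]
  rw [Fintype.sum_prod_type, Finset.sum_eq_single k]
  · simp
  · intro b _ hb
    simp [Matrix.one_apply_ne hb.symm]
  · simp

theorem regressor_mvec {n m p : ℕ} (y : Fin p → ℝ) (u : Fin m → ℝ) :
    mvec (regressor n y u) = (Lxi n m p).mulVec y + (Bxi n m p).mulVec u := by
  ext ⟨k, i⟩
  rcases k with ⟨a, b⟩ | ⟨a, b⟩ <;>
  simp [regressor, mvec, Lxi, Bxi, rowKron, Matrix.mulVec, dotProduct, Matrix.one_apply, eq_comm]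

/-- dynamics of `ξ̂ := vec(M)` driven by the transverse coordinate.
With `θ := [vec(T·L); vec(T·B)]`, `Pi := θᵀ ⊗ T⁻¹`, `C_ξ := C·Pi`,
`A_ξ := (I_μ ⊗ F) + L_ξ·C_ξ` and `β := T·x − M·θ`, along the trajectories of the plant
and of the filter one has `ξ̂' = A_ξ·ξ̂ + L_ξ·C·T⁻¹·β + B_ξ·u` for all `t ≥ 0`. -/
theorem stmt11 {n m p : ℕ}
    (A : Matrix (Fin n) (Fin n) ℝ) (B : Matrix (Fin n) (Fin m) ℝ)
    (C : Matrix (Fin p) (Fin n) ℝ)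
    (F : Matrix (Fin n) (Fin n) ℝ) (L : Matrix (Fin n) (Fin p) ℝ)
    (T : Matrix (Fin n) (Fin n) ℝ) (hT : IsUnit T)
    (hFT : F * T = T * (A - L * C))
    (θ : Kix n m p → ℝ) (hθ : θ = Sum.elim (mvec (T * L)) (mvec (T * B)))
    (Pim : Matrix (Fin n) (Kix n m p × Fin n) ℝ) (hPim : Pim = rowKron θ T⁻¹)
    (Cξ : Matrix (Fin p) (Kix n m p × Fin n) ℝ) (hCξ : Cξ = C * Pim)
    (Aξ : Matrix (Kix n m p × Fin n) (Kix n m p × Fin n) ℝ)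
    (hAξ : Aξ = Fxi F + Lxi n m p * Cξ)
    (u : ℝ → Fin m → ℝ) (x : ℝ → Fin n → ℝ) (M : ℝ → Matrix (Fin n) (Kix n m p) ℝ)
    (hx : ∀ t, 0 ≤ t → ∀ i, HasDerivAt (fun s => x s i)
        ((A.mulVec (x t) + B.mulVec (u t)) i) t)
    (hM : ∀ t, 0 ≤ t → ∀ i j, HasDerivAt (fun s => M s i j)
        ((F * M t + regressor n (C.mulVec (x t)) (u t)) i j) t)
    (β : ℝ → Fin n → ℝ) (hβ : ∀ t, β t = T.mulVec (x t) - (M t).mulVec θ) :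
    ∀ t, 0 ≤ t → ∀ q : Kix n m p × Fin n,
      HasDerivAt (fun s => mvec (M s) q)
        ((Aξ.mulVec (mvec (M t)) + (Lxi n m p * C * T⁻¹).mulVec (β t)
          + (Bxi n m p).mulVec (u t)) q) t := by
  intro t ht q
  have hd := T.isUnit_iff_isUnit_det.mp hT
  refine (hM t ht q.2 q.1).congr_deriv ?_
  symm
  change _ = mvec (F * M t + regressor n (C.mulVec (x t)) (u t)) q
  have h1 : mvec (F * M t + regressor n (C.mulVec (x t)) (u t))
      = mvec (F * M t) + mvec (regressor n (C.mulVec (x t)) (u t)) := rfl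
  rw [h1, regressor_mvec, ← Fxi_mulVec_mvec, hAξ, hCξ, hPim, hβ]
  congr 1
  rw [Matrix.add_mulVec, ← add_assoc, add_assoc ((Fxi F).mulVec _)]
  congr 2
  rw [← Matrix.mulVec_mulVec, ← Matrix.mulVec_mulVec, rowKron_mulVec_mvec, Matrix.mul_assoc,
    ← Matrix.mulVec_mulVec, ← Matrix.mulVec_mulVec, ← Matrix.mulVec_add, ← Matrix.mulVec_add,
    ← Matrix.mulVec_add, add_sub_cancel, Matrix.mulVec_mulVec (x t), Matrix.nonsing_inv_mul _ hd,
    Matrix.one_mulVec]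
end

section
/- Let A ∈ ℝ^{n×n}, B ∈ ℝ^{n×m}, C ∈ ℝ^{p×n}, μ := (p+m)·n, let F ∈ ℝ^{n×n} be Hurwitz, L ∈ ℝ^{n×p}, and T ∈ ℝ^{n×n} invertible with F·T = T·(A − L·C). Define θ := [vec(T·L); vec(T·B)], Π := θ^⊤ ⊗ T^{−1}, F_ξ := I_μ ⊗ F, B_ξ := [0_{pn²×m}; I_m ⊗ vec(I_n)], L_ξ := [I_p ⊗ vec(I_n); 0_{mn²×p}], C_ξ := C·Π, A_ξ := F_ξ + L_ξ·C_ξ. Let Λ ∈ ℝ^{n×n} be Hurwitz, Γ ∈ ℝ^{n×n} arbitrary, and set A_e := [[Λ, 0], [L_ξ·C·T^{−1}·Γ, A_ξ]] ∈ ℝ^{(n+nμ)×(n+nμ)}, B_e := [0_{n×m}; B_ξ]. Let K_e ∈ ℝ^{m×(n+nμ)} be such that A_e + B_e·K_e is Hurwitz. Consider the closed loop: x : ℝ → ℝ^n differentiable with x'(t) = A·x(t) + B·u(t), y(t) = C·x(t), M : ℝ → ℝ^{n×μ} differentiable with M'(t) = F·M(t) + [y(t)^⊤ ⊗ I_n ,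 u(t)^⊤ ⊗ I_n], and u(t) := K_e·[0_n; vec(M(t))]. Then the origin (x, M) = 0 is globally exponentially stable: there exist c > 0 and λ > 0 such that for all initial conditions x(0) ∈ ℝ^n, M(0) ∈ ℝ^{n×μ} and all t ≥ 0, ‖x(t)‖ + ‖M(t)‖_F ≤ c·e^{−λ·t}·(‖x(0)‖ + ‖M(0)‖_F). -/
open Matrix Filter
open scoped Kronecker

/-- Scalar comparison: a forced stable first-order equation decays exponentially. -/
lemma scalar_decay {E : Type*} [NormedAddCommGroup E] [NormedSpace ℂ E]
    (a : ℂ) (lam K : ℝ) (ha : a.re < -lam) (hK : 0 ≤ K) (w g : ℝ → E)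
    (hw : ∀ t, 0 ≤ t → HasDerivAt w (a • w t + g t) t)
    (hg : ∀ t, 0 ≤ t → ‖g t‖ ≤ K * Real.exp (-lam * t)) :
    ∀ t, 0 ≤ t → ‖w t‖ ≤ (‖w 0‖ + K / (-lam - a.re)) * Real.exp (-lam * t) := by
  intro t ht
  set δ : ℝ := -lam - a.re with hδ
  have hδ0 : 0 < δ := by rw [hδ]; linarith
  have hnorm : ∀ s : ℝ, ‖Complex.exp (-a * (s : ℂ))‖ = Real.exp (-a.re * s) := by
    intro s; rw [Complex.norm_exp]; simp
  have hv : ∀ s : ℝ, 0 ≤ s → HasDerivAt (fun s : ℝ => Complex.exp (-a * (s : ℂ)) • w s)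
      (Complex.exp (-a * (s : ℂ)) • g s) s := by
    intro s hs
    have h1 : HasDerivAt (fun s : ℝ => Complex.exp (-a * (s : ℂ)))
        (Complex.exp (-a * (s : ℂ)) * (-a * 1)) s :=
      ((Complex.ofRealCLM.hasDerivAt (x := s)).const_mul (-a)).cexp
    have h2 := h1.smul (hw s hs)
    refine h2.congr_deriv ?_
    rw [smul_add, smul_smul]
    have : Complex.exp (-a * (s : ℂ)) * (-a * 1) = -(Complex.exp (-a * (s : ℂ)) * a) := by ring
    rw [this, neg_smul]
    abel
  have hB : ∀ s : ℝ, HasDerivAt (fun s : ℝ => ‖w 0‖ + K / δ * Real.exp (δ * s))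
      (K * Real.exp (δ * s)) s := by
    intro s
    have h1 : HasDerivAt (fun s : ℝ => Real.exp (δ * s)) (Real.exp (δ * s) * (δ * 1)) s :=
      ((hasDerivAt_id s).const_mul δ).exp
    refine ((h1.const_mul (K / δ)).const_add ‖w 0‖).congr_deriv ?_
    field_simp
  have key := image_norm_le_of_norm_deriv_right_le_deriv_boundary
    (f := fun s : ℝ => Complex.exp (-a * (s : ℂ)) • w s)
    (f' := fun s : ℝ => Complex.exp (-a * (s : ℂ)) • g s) (a := 0) (b := t)
    (B := fun s : ℝ => ‖w 0‖ + K / δ * Real.exp (δ * s))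
    (B' := fun s : ℝ => K * Real.exp (δ * s))
    (fun s hs => (hv s hs.1).continuousAt.continuousWithinAt)
    (fun s hs => (hv s hs.1).hasDerivWithinAt)
    (by simp; positivity) hB
    (by
      intro s hs
      rw [norm_smul, hnorm]
      calc Real.exp (-a.re * s) * ‖g s‖
          ≤ Real.exp (-a.re * s) * (K * Real.exp (-lam * s)) := by
            gcongr; exact hg s hs.1
        _ = K * Real.exp (δ * s) := by
            rw [mul_left_comm, ← Real.exp_add]; congr 2; rw [hδ]; ring)
    (show t ∈ Set.Icc 0 t from ⟨ht, le_rfl⟩)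
  rw [norm_smul, hnorm] at key
  have h3 : ‖w t‖ = Real.exp (a.re * t) * (Real.exp (-a.re * t) * ‖w t‖) := by
    rw [← mul_assoc, ← Real.exp_add]; simp
  rw [h3]
  have h4 : Real.exp (a.re * t) ≤ Real.exp (-lam * t) := by
    apply Real.exp_le_exp.mpr; nlinarith
  have h5 : Real.exp (a.re * t) * Real.exp (δ * t) = Real.exp (-lam * t) := by
    rw [← Real.exp_add]; congr 1; rw [hδ]; ring
  calc _ ≤ Real.exp (a.re * t) * (‖w 0‖ + K / δ * Real.exp (δ * t)) := by gcongr
    _ = Real.exp (a.re * t) * ‖w 0‖ + K / δ * (Real.exp (a.re * t) * Real.exp (δ * t)) := by ring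
    _ ≤ Real.exp (-lam * t) * ‖w 0‖ + K / δ * Real.exp (-lam * t) := by
        rw [h5]; gcongr
    _ = _ := by ring

lemma exists_gap (s : Multiset ℂ) (hs : ∀ a ∈ s, a.re < 0) :
    ∃ lam > (0 : ℝ), ∀ a ∈ s, a.re < -lam := by
  induction s using Multiset.induction_on with
  | empty => exact ⟨1, one_pos, by simp⟩
  | cons a s ih =>
    obtain ⟨l, hl, h⟩ := ih (fun b hb => hs b (Multiset.mem_cons_of_mem hb))
    have ha := hs a (Multiset.mem_cons_self a s)
    refine ⟨min l (-a.re / 2), lt_min hl (by linarith), ?_⟩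
    intro b hb
    rcases Multiset.mem_cons.mp hb with rfl | hb
    · have := min_le_right l (-b.re / 2); linarith
    · have := min_le_left l (-a.re / 2); have := h b hb; linarith

lemma poly_decay {N : Type*} [Fintype N] [DecidableEq N] (H : Matrix N N ℂ) (lam : ℝ)
    (s : Multiset ℂ) (hs : ∀ a ∈ s, a.re < -lam) :
    ∃ c ≥ (0 : ℝ), ∀ w : ℝ → N → ℂ, (∀ t, 0 ≤ t → HasDerivAt w (H *ᵥ w t) t) →
      (∀ t, 0 ≤ t → (Polynomial.aeval H
        (s.map (fun a => Polynomial.X - Polynomial.C a)).prod) *ᵥ w t = 0) →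
      ∀ t, 0 ≤ t → ‖w t‖ ≤ c * Real.exp (-lam * t) * ‖w 0‖ := by
  induction s using Multiset.induction_on with
  | empty =>
    refine ⟨0, le_rfl, fun w _ h t ht => ?_⟩
    have := h t ht
    simp at this
    simp [this]
  | cons a s ih =>
    obtain ⟨c, hc, h⟩ := ih (fun b hb => hs b (Multiset.mem_cons_of_mem hb))
    have ha := hs a (Multiset.mem_cons_self a s)
    let D : (N → ℂ) →L[ℂ] (N → ℂ) := LinearMap.toContinuousLinearMap (H - a • 1).mulVecLin
    have hD : ∀ v, D v = (H - a • 1) *ᵥ v := fun v => rfl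
    have hδ : 0 < -lam - a.re := by linarith
    refine ⟨1 + c * ‖D‖ / (-lam - a.re), by positivity, fun w hw hp t ht => ?_⟩
    have hDw : ∀ t, 0 ≤ t → HasDerivAt (fun s => D (w s)) (H *ᵥ D (w t)) t := by
      intro t ht
      have h1 := (D.restrictScalars ℝ).hasFDerivAt.comp_hasDerivAt t (hw t ht)
      refine h1.congr_deriv ?_
      simp only [ContinuousLinearMap.coe_restrictScalars', hD, Matrix.mulVec_mulVec]
      congr 1
      simp [sub_mul, mul_sub]
    have hq : ∀ t, 0 ≤ t → (Polynomial.aeval H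
        (s.map (fun a => Polynomial.X - Polynomial.C a)).prod) *ᵥ D (w t) = 0 := by
      intro t ht
      have := hp t ht
      rw [Multiset.map_cons, Multiset.prod_cons, mul_comm, map_mul, ← Matrix.mulVec_mulVec] at this
      rw [hD]
      rwa [map_sub, Polynomial.aeval_X, Polynomial.aeval_C,
        Algebra.algebraMap_eq_smul_one] at this
    have h2 := h _ hDw hq
    have h3 := scalar_decay a lam (c * ‖D (w 0)‖) ha (by positivity) w (fun t => D (w t))
      (fun t ht => by
        refine (hw t ht).congr_deriv ?_
        rw [hD, Matrix.sub_mulVec, Matrix.smul_mulVec, Matrix.one_mulVec]; abel)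
      (fun t ht => (h2 t ht).trans (le_of_eq (by ring))) t ht
    refine h3.trans ?_
    have h4 : ‖D (w 0)‖ ≤ ‖D‖ * ‖w 0‖ := D.le_opNorm _
    calc _ ≤ (‖w 0‖ + c * (‖D‖ * ‖w 0‖) / (-lam - a.re)) * Real.exp (-lam * t) := by gcongr
      _ = _ := by ring

/-- `IsHurwitz` in terms of the roots of the characteristic polynomial. -/
lemma isHurwitz_iff {N : Type*} [Fintype N] [DecidableEq N] (H : Matrix N N ℝ) :
    IsHurwitz H ↔ ∀ z : ℂ, (H.map (Complex.ofReal : ℝ → ℂ)).charpoly.IsRoot z → z.re < 0 := by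
  unfold IsHurwitz
  simp only [Matrix.mem_spectrum_iff_isRoot_charpoly]

lemma hurwitz_decay {N : Type*} [Fintype N] [DecidableEq N] (H : Matrix N N ℝ)
    (hH : IsHurwitz H) :
    ∃ c ≥ (0 : ℝ), ∃ lam > (0 : ℝ), ∀ z : ℝ → N → ℝ,
      (∀ t, 0 ≤ t → ∀ i, HasDerivAt (fun s => z s i) ((H *ᵥ z t) i) t) →
      ∀ t, 0 ≤ t → ‖z t‖ ≤ c * Real.exp (-lam * t) * ‖z 0‖ := by
  rw [isHurwitz_iff] at hH
  set Hc := H.map (Complex.ofReal : ℝ → ℂ) with hHc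
  obtain ⟨lam, hl, hgap⟩ := exists_gap Hc.charpoly.roots
    (fun a ha => hH a (Polynomial.isRoot_of_mem_roots ha))
  obtain ⟨c, hc, h⟩ := poly_decay Hc lam _ hgap
  refine ⟨c, hc, lam, hl, fun z hz t ht => ?_⟩
  have hn : ∀ t, ‖(fun i => (z t i : ℂ))‖ = ‖z t‖ := by
    intro t; simp [Pi.norm_def]
  have := h (fun t i => (z t i : ℂ)) (fun t ht => by
    rw [hasDerivAt_pi]
    intro i
    refine (hz t ht i).ofReal_comp.congr_deriv ?_
    simp [Hc, Matrix.mulVec, dotProduct]) (fun t ht => by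
    rw [← (IsAlgClosed.splits Hc.charpoly).eq_prod_roots_of_monic (Matrix.charpoly_monic _),
      Matrix.aeval_self_charpoly, Matrix.zero_mulVec]) t ht
  rwa [hn, hn] at this

lemma hurwitz_fromBlocks {N K : Type*} [Fintype N] [DecidableEq N] [Fintype K] [DecidableEq K]
    (P : Matrix N N ℝ) (Q : Matrix K N ℝ) (R : Matrix K K ℝ) :
    IsHurwitz (Matrix.fromBlocks P 0 Q R) ↔ IsHurwitz P ∧ IsHurwitz R := by
  simp only [isHurwitz_iff, Matrix.fromBlocks_map]
  have : (0 : Matrix N K ℝ).map (Complex.ofReal : ℝ → ℂ) = 0 := by ext; simp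
  rw [this, Matrix.charpoly_fromBlocks_zero₁₂]
  simp only [Polynomial.IsRoot, Polynomial.eval_mul, mul_eq_zero]
  constructor
  · exact fun h => ⟨fun z hz => h z (Or.inl hz), fun z hz => h z (Or.inr hz)⟩
  · rintro ⟨h1, h2⟩ z (hz | hz)
    exacts [h1 z hz, h2 z hz]

lemma hurwitz_similar {N : Type*} [Fintype N] [DecidableEq N] (S H W : Matrix N N ℝ)
    (hW : IsUnit W) (h : W * S = H * W) (hH : IsHurwitz H) : IsHurwitz S := by
  obtain ⟨U, rfl⟩ := hW
  have hS : H = U.val * S * U⁻¹.val := by rw [h, mul_assoc]; simp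
  rw [isHurwitz_iff] at *
  have e : ∀ X : Matrix N N ℝ, (X.map (Complex.ofReal : ℝ → ℂ)).charpoly
      = X.charpoly.map Complex.ofRealHom := fun X => Matrix.charpoly_map X Complex.ofRealHom
  rw [e] at *
  rwa [hS, Matrix.coe_units_inv, Matrix.charpoly_units_conj] at hH

lemma abs_le_euclNorm {ι : Type*} [Fintype ι] (v : ι → ℝ) (i : ι) : |v i| ≤ euclNorm v := by
  apply Real.abs_le_sqrt
  exact Finset.single_le_sum (f := fun i => v i ^ 2) (fun _ _ => sq_nonneg _) (Finset.mem_univ i)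

lemma euclNorm_le {ι : Type*} [Fintype ι] (v : ι → ℝ) (r : ℝ) (hr : 0 ≤ r)
    (h : ∀ i, |v i| ≤ r) : euclNorm v ≤ (Fintype.card ι) * r := by
  have h1 : euclNorm v ≤ ∑ i, |v i| := by
    apply Real.sqrt_le_iff.mpr
    refine ⟨Finset.sum_nonneg fun _ _ => abs_nonneg _, ?_⟩
    calc ∑ i, v i ^ 2 = ∑ i, |v i| ^ 2 := by simp
      _ ≤ _ := Finset.sum_sq_le_sq_sum_of_nonneg fun _ _ => abs_nonneg _
  refine h1.trans ((Finset.sum_le_sum fun i _ => h i).trans ?_)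
  simp

lemma frobNorm_eq {l : ℕ} {K : Type*} [Fintype K] (X : Matrix (Fin l) K ℝ) :
    frobNorm X = euclNorm (mvec X) := by
  unfold frobNorm euclNorm mvec
  rw [Fintype.sum_prod_type, Finset.sum_comm]

lemma rowKron_apply {n : ℕ} {K : Type*} (θ : K → ℝ) (S : Matrix (Fin n) (Fin n) ℝ) (i q) :
    rowKron θ S i q = θ q.1 * S i q.2 := rfl

lemma rowKron_mul {n : ℕ} {K : Type*} (θ : K → ℝ) (R S : Matrix (Fin n) (Fin n) ℝ) :
    R * rowKron θ S = rowKron θ (R * S) := by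
  ext i q
  simp only [Matrix.mul_apply, rowKron_apply, Finset.mul_sum]
  exact Finset.sum_congr rfl fun _ _ => by ring

lemma rowKron_Fxi {n m p : ℕ} (θ : Kix n m p → ℝ) (S F : Matrix (Fin n) (Fin n) ℝ) :
    rowKron θ S * Fxi (m := m) (p := p) F = rowKron θ (S * F) := by
  ext i ⟨k, j⟩
  rw [Matrix.mul_apply, Fintype.sum_prod_type, rowKron_apply]
  simp only [rowKron_apply, Fxi, Matrix.kroneckerMap_apply, Matrix.one_apply]
  rw [Finset.sum_eq_single k]
  · simp [Matrix.mul_apply, Finset.mul_sum, mul_assoc]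
  · intro b _ hb; simp [hb]
  · simp

lemma rowKron_Lxi {n m p : ℕ} (X : Matrix (Fin n) (Fin p) ℝ) (Y : Matrix (Fin n) (Fin m) ℝ)
    (S : Matrix (Fin n) (Fin n) ℝ) :
    rowKron (Sum.elim (mvec X) (mvec Y)) S * Lxi n m p = S * X := by
  ext i j
  simp only [Matrix.mul_apply, Fintype.sum_prod_type, Fintype.sum_sum_type, rowKron_apply, Lxi,
    Matrix.of_apply, Sum.elim_inl, Sum.elim_inr, mvec, Matrix.one_apply]
  simp [mul_comm]

lemma rowKron_Bxi {n m p : ℕ} (X : Matrix (Fin n) (Fin p) ℝ) (Y : Matrix (Fin n) (Fin m) ℝ)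
    (S : Matrix (Fin n) (Fin n) ℝ) :
    rowKron (Sum.elim (mvec X) (mvec Y)) S * Bxi n m p = S * Y := by
  ext i j
  simp only [Matrix.mul_apply, Fintype.sum_prod_type, Fintype.sum_sum_type, rowKron_apply, Bxi,
    Matrix.of_apply, Sum.elim_inl, Sum.elim_inr, mvec, Matrix.one_apply]
  simp [mul_comm]

lemma mvec_filter {n m p : ℕ} (F : Matrix (Fin n) (Fin n) ℝ) (M : Matrix (Fin n) (Kix n m p) ℝ)
    (y : Fin p → ℝ) (u : Fin m → ℝ) :
    mvec (F * M + regressor n y u)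
      = Fxi F *ᵥ mvec M + Lxi n m p *ᵥ y + Bxi n m p *ᵥ u := by
  ext ⟨k, i⟩
  have h1 : (Fxi F *ᵥ mvec M) (k, i) = (F * M) i k := by
    simp only [Matrix.mulVec, dotProduct, Fintype.sum_prod_type, Fxi, Matrix.kroneckerMap_apply,
      Matrix.one_apply, mvec, Matrix.mul_apply]
    rw [Finset.sum_eq_single k]
    · simp
    · intro b _ hb; simp [hb.symm]
    · simp
  simp only [Pi.add_apply, h1]
  simp only [mvec, Matrix.add_apply, add_assoc]
  congr 1
  rcases k with ⟨a, b⟩ | ⟨a, b⟩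
  · simp [regressor, rowKron_apply, Lxi, Bxi, Matrix.mulVec, dotProduct, Matrix.one_apply,
      eq_comm]
  · simp [regressor, rowKron_apply, Lxi, Bxi, Matrix.mulVec, dotProduct, Matrix.one_apply,
      eq_comm]

/-- Lemma 4 in the paper: the filter-based output-feedback controller
achieves global exponential stability of the closed loop. With
`A_e = [[Λ, 0], [L_ξ·C·T⁻¹·Γ, A_ξ]]`, `B_e = [0; B_ξ]` and a gain `K_e` making
`A_e + B_e·K_e` Hurwitz, the closed loop `x' = Ax + Bu`, `y = Cx`,
`M' = FM + [yᵀ ⊗ Iₙ, uᵀ ⊗ Iₙ]`, `u = K_e·[0ₙ; vec(M)]` satisfies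
`‖x(t)‖ + ‖M(t)‖_F ≤ c·e^{−λt}·(‖x(0)‖ + ‖M(0)‖_F)` for some `c, λ > 0`
uniform over all initial conditions. -/
theorem stmt12 {n m p : ℕ}
    (A : Matrix (Fin n) (Fin n) ℝ) (B : Matrix (Fin n) (Fin m) ℝ)
    (C : Matrix (Fin p) (Fin n) ℝ)
    (F : Matrix (Fin n) (Fin n) ℝ) (hHur : IsHurwitz F)
    (L : Matrix (Fin n) (Fin p) ℝ)
    (T : Matrix (Fin n) (Fin n) ℝ) (hT : IsUnit T)
    (hFT : F * T = T * (A - L * C))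
    (θ : Kix n m p → ℝ) (hθ : θ = Sum.elim (mvec (T * L)) (mvec (T * B)))
    (Pim : Matrix (Fin n) (Kix n m p × Fin n) ℝ) (hPim : Pim = rowKron θ T⁻¹)
    (Cξ : Matrix (Fin p) (Kix n m p × Fin n) ℝ) (hCξ : Cξ = C * Pim)
    (Aξ : Matrix (Kix n m p × Fin n) (Kix n m p × Fin n) ℝ)
    (hAξ : Aξ = Fxi F + Lxi n m p * Cξ)
    (Lam : Matrix (Fin n) (Fin n) ℝ) (hLam : IsHurwitz Lam)
    (Γ : Matrix (Fin n) (Fin n) ℝ)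
    (Ae : Matrix (Fin n ⊕ Kix n m p × Fin n) (Fin n ⊕ Kix n m p × Fin n) ℝ)
    (hAe : Ae = Matrix.fromBlocks Lam 0 (Lxi n m p * C * T⁻¹ * Γ) Aξ)
    (Be : Matrix (Fin n ⊕ Kix n m p × Fin n) (Fin m) ℝ)
    (hBe : Be = Matrix.fromRows (0 : Matrix (Fin n) (Fin m) ℝ) (Bxi n m p))
    (Ke : Matrix (Fin m) (Fin n ⊕ Kix n m p × Fin n) ℝ)
    (hKe : IsHurwitz (Ae + Be * Ke)) :
    ∃ c > (0 : ℝ), ∃ lam > (0 : ℝ),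
      ∀ (x : ℝ → Fin n → ℝ) (M : ℝ → Matrix (Fin n) (Kix n m p) ℝ)
        (u : ℝ → Fin m → ℝ),
        (∀ t, u t = Ke.mulVec (Sum.elim (0 : Fin n → ℝ) (mvec (M t)))) →
        (∀ t, 0 ≤ t → ∀ i, HasDerivAt (fun s => x s i)
            ((A.mulVec (x t) + B.mulVec (u t)) i) t) →
        (∀ t, 0 ≤ t → ∀ i j, HasDerivAt (fun s => M s i j)
            ((F * M t + regressor n (C.mulVec (x t)) (u t)) i j) t) →
        ∀ t, 0 ≤ t →
          euclNorm (x t) + frobNorm (M t) ≤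
            c * Real.exp (-lam * t) * (euclNorm (x 0) + frobNorm (M 0)) := by
  obtain ⟨K1, K2, rfl⟩ : ∃ K1 K2, Ke = Matrix.fromCols K1 K2 :=
    ⟨Ke.toCols₁, Ke.toCols₂, (Matrix.fromCols_toCols Ke).symm⟩
  have hTdet : IsUnit T.det := (Matrix.isUnit_iff_isUnit_det T).mp hT
  have hTi : T * T⁻¹ = 1 := Matrix.mul_nonsing_inv T hTdet
  have hiT : T⁻¹ * T = 1 := Matrix.nonsing_inv_mul T hTdet
  have h22 : IsHurwitz (Aξ + Bxi n m p * K2) := by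
    rw [hAe, hBe, Matrix.fromRows_mul_fromCols, Matrix.fromBlocks_add] at hKe
    simp only [Matrix.zero_mul, add_zero] at hKe
    exact ((hurwitz_fromBlocks _ _ _).mp hKe).2
  have hH : IsHurwitz (Matrix.fromBlocks F 0 (Lxi n m p * C * T⁻¹) (Aξ + Bxi n m p * K2)) :=
    (hurwitz_fromBlocks _ _ _).mpr ⟨hHur, h22⟩
  have hPL : Pim * Lxi n m p = L := by
    rw [hPim, hθ, rowKron_Lxi, ← Matrix.mul_assoc, hiT, Matrix.one_mul]
  have hPB : Pim * Bxi n m p = B := by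
    rw [hPim, hθ, rowKron_Bxi, ← Matrix.mul_assoc, hiT, Matrix.one_mul]
  have hPF : T * Pim * Fxi (m := m) (p := p) F = F * (T * Pim) := by
    rw [hPim, rowKron_mul, rowKron_Fxi, rowKron_mul, hTi, Matrix.one_mul, Matrix.mul_one]
  have hS : IsHurwitz (Matrix.fromBlocks A (B * K2) (Lxi n m p * C)
      (Fxi F + Bxi n m p * K2)) := by
    refine hurwitz_similar _ _ (Matrix.fromBlocks T (-(T * Pim)) 0 1) ?_ ?_ hH
    · rw [Matrix.isUnit_iff_isUnit_det, Matrix.det_fromBlocks_zero₂₁]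
      simpa using hTdet
    · rw [Matrix.fromBlocks_multiply, Matrix.fromBlocks_multiply]
      have e1 : T * Pim * (Lxi n m p * C) = T * L * C := by
        rw [← Matrix.mul_assoc, Matrix.mul_assoc T, hPL]
      have e2 : T * Pim * (Bxi n m p * K2) = T * (B * K2) := by
        rw [← Matrix.mul_assoc, Matrix.mul_assoc T, hPB, Matrix.mul_assoc]
      have e3 : Lxi n m p * C * T⁻¹ * T = Lxi n m p * C := by
        rw [Matrix.mul_assoc, hiT, Matrix.mul_one]
      have e4 : Lxi n m p * C * T⁻¹ * (T * Pim) = Lxi n m p * (C * Pim) := by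
        rw [← Matrix.mul_assoc, e3, Matrix.mul_assoc]
      congr 1
      · rw [Matrix.neg_mul, e1, hFT, Matrix.mul_sub, Matrix.mul_zero, Matrix.mul_assoc]; abel
      · rw [Matrix.neg_mul, Matrix.mul_add, e2, hPF, Matrix.mul_neg, Matrix.zero_mul]; abel
      · rw [e3]; simp
      · rw [Matrix.mul_neg, e4, hAξ, hCξ]; simp only [Matrix.zero_mul, Matrix.one_mul,
          Matrix.mul_one]; abel
  obtain ⟨c, hc, lam, hlam, hdec⟩ := hurwitz_decay _ hS
  set d : ℝ := (Fintype.card (Fin n) : ℝ) + (Fintype.card (Kix n m p × Fin n) : ℝ) with hd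
  have hd0 : 0 ≤ d := by positivity
  refine ⟨d * c + 1, by positivity, lam, hlam, ?_⟩
  intro x M u hu hx hM t ht
  have hu' : ∀ t, u t = K2 *ᵥ mvec (M t) := by
    intro t
    rw [hu t, Matrix.fromCols_mulVec]
    simp
  have h := hdec (fun t => Sum.elim (x t) (mvec (M t))) (by
    intro t ht i
    rw [Matrix.fromBlocks_mulVec]
    rcases i with i | ⟨k, i⟩
    · refine (hx t ht i).congr_deriv ?_
      simp [hu', Matrix.mulVec_mulVec]
    · refine (hM t ht i k).congr_deriv ?_
      have := congrFun (mvec_filter F (M t) (C *ᵥ x t) (u t)) (k, i)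
      rw [show (F * M t + regressor n (C *ᵥ x t) (u t)) i k
        = mvec (F * M t + regressor n (C *ᵥ x t) (u t)) (k, i) from rfl, this, hu']
      simp [Matrix.mulVec_mulVec, Matrix.add_mulVec]
      ring) t ht
  have hx0 : 0 ≤ euclNorm (x 0) := Real.sqrt_nonneg _
  have hM0 : 0 ≤ frobNorm (M 0) := Real.sqrt_nonneg _
  have h0 : ‖Sum.elim (x 0) (mvec (M 0))‖ ≤ euclNorm (x 0) + frobNorm (M 0) := by
    rw [pi_norm_le_iff_of_nonneg (by positivity)]
    rintro (i | i)
    · exact (abs_le_euclNorm (x 0) i).trans (by linarith)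
    · refine (abs_le_euclNorm (mvec (M 0)) i).trans ?_
      rw [← frobNorm_eq]; linarith
  set r := ‖Sum.elim (x t) (mvec (M t))‖ with hr
  have hr0 : 0 ≤ r := norm_nonneg _
  have h1 : euclNorm (x t) ≤ Fintype.card (Fin n) * r :=
    euclNorm_le _ _ hr0 fun i => norm_le_pi_norm (Sum.elim (x t) (mvec (M t))) (Sum.inl i)
  have h2 : frobNorm (M t) ≤ Fintype.card (Kix n m p × Fin n) * r := by
    rw [frobNorm_eq]
    exact euclNorm_le _ _ hr0 fun i => norm_le_pi_norm (Sum.elim (x t) (mvec (M t))) (Sum.inr i)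
  calc euclNorm (x t) + frobNorm (M t) ≤ d * r := by rw [hd, add_mul]; linarith
    _ ≤ d * (c * Real.exp (-lam * t) * (euclNorm (x 0) + frobNorm (M 0))) := by
        gcongr; exact h.trans (by gcongr)
    _ = (d * c) * Real.exp (-lam * t) * (euclNorm (x 0) + frobNorm (M 0)) := by ring
    _ ≤ _ := by gcongr; linarith
end

section
/- Let A_e ∈ ℝ^{q×q} and B_e ∈ ℝ^{q×m} with the pair (A_e, B_e) stabilizable. Let t_D > 0, let u : [0, t_D] → ℝ^m, and let z : [0, t_D] → ℝ^q be absolutely continuous with z'(t) = A_e·z(t) + B_e·u(t) for almost every t ∈ [0, t_D]. Define 𝒵 := ∫₀^{t_D} z(s)·z(s)^⊤ ds ∈ ℝ^{q×q} and the reachability matrix ℛ := [B_e, A_e·B_e, …, A_e^{q−1}·B_e], and assume Im ℛ ⊆ Im 𝒵 (column spaces). Let l := rank 𝒵 with l < q, and let T_z ∈ ℝ^{q×q} be orthogonal such that T_z·𝒵·T_z^⊤ = [[Σ₀, 0], [0, 0]] with Σ₀ ∈ ℝ^{l×l} positive definite. Partition T_z·A_e·T_z^⊤ = [[A_a, A_ab],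 [A_ba, A_b]] and T_z·B_e = [B_a; B_b] with A_a ∈ ℝ^{l×l}, A_b ∈ ℝ^{(q−l)×(q−l)}, B_a ∈ ℝ^{l×m}. Then A_ba = 0, B_b = 0, and A_b is Hurwitz. -/
open Matrix Filter
open scoped Kronecker

theorem aux_zero_of_sq {f : ℝ → ℝ} {T : ℝ} (hT : 0 < T) (hf : ContinuousOn f (Set.Icc 0 T))
    (h : ∫ s in (0 : ℝ)..T, f s * f s = 0) : ∀ t ∈ Set.Icc 0 T, f t = 0 := by
  intro t ht
  by_contra hne
  have hpos : 0 < ∫ s in (0 : ℝ)..T, f s * f s :=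
    intervalIntegral.integral_pos hT (hf.mul hf) (fun x _ => mul_self_nonneg _)
      ⟨t, ht, mul_self_pos.2 hne⟩
  exact hpos.ne' h

theorem aux_zero_of_int {f : ℝ → ℝ} {T : ℝ} (hf : ContinuousOn f (Set.Icc 0 T))
    (h : ∀ t ∈ Set.Icc 0 T, ∫ s in (0 : ℝ)..t, f s = 0) : ∀ t ∈ Set.Ioo 0 T, f t = 0 := by
  intro t ht
  have hnhds : Set.Icc 0 T ∈ nhds t := Icc_mem_nhds ht.1 ht.2
  have hi : IntervalIntegrable f MeasureTheory.volume 0 t := by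
    apply ContinuousOn.intervalIntegrable
    rw [Set.uIcc_of_le ht.1.le]
    exact hf.mono (Set.Icc_subset_Icc le_rfl ht.2.le)
  have hd := intervalIntegral.integral_hasDerivAt_right hi
    (hf.stronglyMeasurableAtFilter_nhdsWithin measurableSet_Icc t |>.filter_mono
      (le_of_eq (nhdsWithin_eq_nhds.2 hnhds).symm))
    (hf.continuousAt hnhds)
  have hc : HasDerivAt (fun x => ∫ s in (0 : ℝ)..x, f s) 0 t := by
    refine (hasDerivAt_const t (0 : ℝ)).congr_of_eventuallyEq ?_
    filter_upwards [hnhds] with x hx using h x hx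
  exact hd.unique hc

theorem aux_vecMul_inj {q m : Type*} [Fintype q] [DecidableEq q] [Fintype m]
    (M : Matrix q m ℂ) (h : M.rank = Fintype.card q) (x : q → ℂ) (hx : x ᵥ* M = 0) : x = 0 := by
  have hli : LinearIndependent ℂ M.row := by
    rw [linearIndependent_iff_card_eq_finrank_span, ← h, Matrix.rank_eq_finrank_span_row]
    rfl
  have hinj := Matrix.vecMul_injective_iff.2 hli
  exact hinj (by simpa using hx)

theorem aux_hurwitz {q m k l : Type*} [Fintype q] [DecidableEq q] [Fintype m] [Fintype k]
    [DecidableEq k] [Fintype l] [DecidableEq l]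
    (Ae : Matrix q q ℝ) (Be : Matrix q m ℝ) (hstab : IsStabilizable Ae Be)
    (W : Matrix k q ℝ) (hW : W * Wᵀ = 1) (Ab : Matrix k k ℝ)
    (hA : W * Ae = Ab * W) (hB : W * Be = 0) : IsHurwitz Ab := by
  intro c hc
  by_contra hre
  push Not at hre
  have hr := hstab c hre
  rw [spectrum.mem_iff, Matrix.isUnit_iff_isUnit_det, isUnit_iff_ne_zero, not_not] at hc
  obtain ⟨v, hv0, hv⟩ := Matrix.exists_vecMul_eq_zero_iff.2 hc
  apply hv0
  let f : ℝ →+* ℂ := Complex.ofRealHom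
  have hA' : W.map f * Ae.map f = Ab.map f * W.map f := by
    rw [← Matrix.map_mul, ← Matrix.map_mul, hA]
  have hB' : W.map f * Be.map f = 0 := by
    rw [← Matrix.map_mul, hB]; ext; simp
  have hW' : W.map f * Wᵀ.map f = 1 := by
    rw [← Matrix.map_mul, hW]; simp
  have hx := aux_vecMul_inj _ hr (v ᵥ* W.map f) (by
    change _ ᵥ* Matrix.fromCols (c • 1 - Ae.map f) (Be.map f) = 0
    have h1 : (v ᵥ* W.map f) ᵥ* (c • 1 - Ae.map f) = 0 := by
      have h2 : W.map f * (c • 1 - Ae.map f) = (algebraMap ℂ (Matrix k k ℂ) c - Ab.map f) * W.map f := by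
        rw [Matrix.mul_sub, Matrix.sub_mul, hA', Algebra.algebraMap_eq_smul_one]; simp
      rw [Matrix.vecMul_vecMul, h2, ← Matrix.vecMul_vecMul]
      change (v ᵥ* (algebraMap ℂ (Matrix k k ℂ) c - Ab.map Complex.ofReal)) ᵥ* _ = 0
      rw [hv, Matrix.zero_vecMul]
    have h3 : (v ᵥ* W.map f) ᵥ* Be.map f = 0 := by
      rw [Matrix.vecMul_vecMul, hB', Matrix.vecMul_zero]
    rw [Matrix.vecMul_fromCols, h1, h3]
    ext (i | i) <;> rfl)
  have := congrArg (fun y => y ᵥ* Wᵀ.map f) hx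
  simpa [Matrix.vecMul_vecMul, hW'] using this

/-- Lemma 5 in the paper: data-driven state decomposition for
stabilizable systems. Given a trajectory `z` of `z' = A_e z + B_e u` (absolutely
continuous, encoded by the integral identity with integrable right-hand side) on
`[0, t_D]` such that `Im ℛ ⊆ Im 𝒵`, and an orthogonal `T_z` putting
`𝒵 := ∫ z zᵀ` in the form `[[Sig₀, 0], [0, 0]]` with `Sig₀ ≻ 0`, the corresponding
partition of `(A_e, B_e)` satisfies `A_ba = 0`, `B_b = 0` and `A_b` Hurwitz. -/
theorem stmt14 {q m l : ℕ}
    (Ae : Matrix (Fin q) (Fin q) ℝ) (Be : Matrix (Fin q) (Fin m) ℝ)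
    (hstab : IsStabilizable Ae Be)
    (tD : ℝ) (htD : 0 < tD)
    (u : ℝ → Fin m → ℝ) (z : ℝ → Fin q → ℝ)
    (hz_cont : ContinuousOn z (Set.Icc 0 tD))
    (hInt : IntervalIntegrable (fun s => Ae.mulVec (z s) + Be.mulVec (u s))
      MeasureTheory.volume 0 tD)
    (hz : ∀ t ∈ Set.Icc (0 : ℝ) tD,
      z t = z 0 + ∫ s in (0 : ℝ)..t, (Ae.mulVec (z s) + Be.mulVec (u s)))
    (Z : Matrix (Fin q) (Fin q) ℝ)
    (hZ : Z = Matrix.of fun i j => ∫ s in (0 : ℝ)..tD, z s i * z s j)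
    (R : Matrix (Fin q) (Fin q × Fin m) ℝ)
    (hR : R = Matrix.of fun i => fun w : Fin q × Fin m => (Ae ^ (w.1 : ℕ) * Be) i w.2)
    (hIm : LinearMap.range R.mulVecLin ≤ LinearMap.range Z.mulVecLin)
    (hrank : Z.rank = l) (hlq : l < q)
    (Tz : Matrix (Fin l ⊕ Fin (q - l)) (Fin q) ℝ)
    (hTz1 : Tz * Tzᵀ = 1) (hTz2 : Tzᵀ * Tz = 1)
    (Sig₀ : Matrix (Fin l) (Fin l) ℝ) (hSig₀ : Sig₀.PosDef)
    (hZdec : Tz * Z * Tzᵀ = Matrix.fromBlocks Sig₀ 0 0 0)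
    (Aa : Matrix (Fin l) (Fin l) ℝ) (Aab : Matrix (Fin l) (Fin (q - l)) ℝ)
    (Aba : Matrix (Fin (q - l)) (Fin l) ℝ) (Ab : Matrix (Fin (q - l)) (Fin (q - l)) ℝ)
    (hAdec : Tz * Ae * Tzᵀ = Matrix.fromBlocks Aa Aab Aba Ab)
    (Ba : Matrix (Fin l) (Fin m) ℝ) (Bb : Matrix (Fin (q - l)) (Fin m) ℝ)
    (hBdec : Tz * Be = Matrix.fromRows Ba Bb) :
    Aba = 0 ∧ Bb = 0 ∧ IsHurwitz Ab := by
  have hWZ : ∀ b, (Tz (Sum.inr b)) ᵥ* Z = 0 := by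
    intro b
    have h1 : Tz * Z = (Matrix.fromBlocks Sig₀ 0 0 0 :
        Matrix (Fin l ⊕ Fin (q - l)) (Fin l ⊕ Fin (q - l)) ℝ) * Tz := by
      rw [← hZdec, Matrix.mul_assoc _ Tzᵀ Tz, hTz2, Matrix.mul_one]
    ext j
    have := congrFun (congrFun h1 (Sum.inr b)) j
    rw [Matrix.mul_apply_eq_vecMul] at this
    rw [this]
    simp [Matrix.mul_apply]
  have hzc : ∀ w : Fin q → ℝ, ContinuousOn (fun s => w ⬝ᵥ z s) (Set.Icc 0 tD) := by
    intro w
    unfold dotProduct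
    fun_prop
  have hzi : ∀ i, ContinuousOn (fun s => z s i) (Set.Icc 0 tD) := by
    intro i; fun_prop
  have hwZ : ∀ (w : Fin q → ℝ) j, (w ᵥ* Z) j = ∫ s in (0 : ℝ)..tD, (w ⬝ᵥ z s) * z s j := by
    intro w j
    simp only [Matrix.vecMul, dotProduct, hZ, Matrix.of_apply, Finset.sum_mul]
    rw [intervalIntegral.integral_finsetSum]
    · simp [mul_assoc]
    · intro i _
      apply ContinuousOn.intervalIntegrable
      rw [Set.uIcc_of_le htD.le]
      have := hzi i
      have := hzi j
      fun_prop
  have hker : ∀ w : Fin q → ℝ, w ᵥ* Z = 0 → ∀ t ∈ Set.Icc 0 tD, w ⬝ᵥ z t = 0 := by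
    intro w hw
    apply aux_zero_of_sq htD (hzc w)
    have h1 : (w ᵥ* Z) ⬝ᵥ w = ∫ s in (0 : ℝ)..tD, (w ⬝ᵥ z s) * (w ⬝ᵥ z s) := by
      simp only [dotProduct, hwZ, ← intervalIntegral.integral_mul_const]
      rw [← intervalIntegral.integral_finsetSum]
      · congr 1; ext s
        rw [Finset.mul_sum]
        exact Finset.sum_congr rfl fun i _ => by ring
      · intro i _
        apply ContinuousOn.intervalIntegrable
        rw [Set.uIcc_of_le htD.le]
        have := hzi i
        have := hzc w
        unfold dotProduct at this
        fun_prop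
    rw [← h1, hw, zero_dotProduct]
  have hBcol : ∀ w : Fin q → ℝ, w ᵥ* Z = 0 → w ᵥ* Be = 0 := by
    intro w hw
    ext j
    have hmem : (fun i => Be i j) ∈ LinearMap.range R.mulVecLin := by
      refine ⟨Pi.single (⟨0, by omega⟩, j) 1, ?_⟩
      ext i
      simp [hR]
    obtain ⟨x, hx⟩ := hIm hmem
    change w ⬝ᵥ (fun i => Be i j) = 0
    rw [← hx, Matrix.mulVecLin_apply, Matrix.dotProduct_mulVec, hw, zero_dotProduct]
  have hinv : ∀ w : Fin q → ℝ, w ᵥ* Z = 0 → (w ᵥ* Ae) ᵥ* Z = 0 := by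
    intro w hw
    have h0 := hker w hw
    have hB0 := hBcol w hw
    have h1 : ∀ t ∈ Set.Ioo 0 tD, (w ᵥ* Ae) ⬝ᵥ z t = 0 := by
      apply aux_zero_of_int (hzc _)
      intro t ht
      have hit : IntervalIntegrable (fun s => Ae.mulVec (z s) + Be.mulVec (u s))
          MeasureTheory.volume 0 t := by
        apply hInt.mono_set
        rw [Set.uIcc_of_le ht.1, Set.uIcc_of_le htD.le]
        exact Set.Icc_subset_Icc le_rfl ht.2
      let L : (Fin q → ℝ) →L[ℝ] ℝ := LinearMap.toContinuousLinearMap (dotProductBilin ℝ ℝ w)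
      have hL : ∀ x, L x = w ⬝ᵥ x := fun x => rfl
      have h2 := L.intervalIntegral_comp_comm hit
      have h3 := congrArg L (hz t ht)
      rw [map_add, ← h2, hL, hL, h0 t ht, h0 0 ⟨le_rfl, htD.le⟩, zero_add] at h3
      refine Eq.trans ?_ h3.symm
      congr 1; ext s
      rw [hL, dotProduct_add, Matrix.dotProduct_mulVec, Matrix.dotProduct_mulVec, hB0,
        zero_dotProduct, add_zero]
    ext j
    rw [hwZ, Pi.zero_apply, intervalIntegral.integral_of_le htD.le,
      MeasureTheory.integral_Ioc_eq_integral_Ioo]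
    apply MeasureTheory.setIntegral_eq_zero_of_forall_eq_zero
    intro t ht
    rw [h1 t ht, zero_mul]
  have hBb : Bb = 0 := by
    ext b j
    have h1 := congrFun (congrFun hBdec (Sum.inr b)) j
    rw [Matrix.mul_apply_eq_vecMul, hBcol _ (hWZ b)] at h1
    simpa using h1.symm
  have hAba : Aba = 0 := by
    have h1 : Tz * Ae * Z * Tzᵀ = Matrix.fromBlocks Aa Aab Aba Ab * Matrix.fromBlocks Sig₀ 0 0 0 := by
      rw [← hZdec, ← hAdec]
      simp only [Matrix.mul_assoc]
      rw [← Matrix.mul_assoc Tzᵀ Tz, hTz2, Matrix.one_mul]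
    rw [Matrix.fromBlocks_multiply] at h1
    have h2 : Aba * Sig₀ = 0 := by
      ext b j
      have h3 := congrFun (congrFun h1 (Sum.inr b)) (Sum.inl j)
      rw [Matrix.mul_apply_eq_vecMul, Matrix.mul_apply_eq_vecMul, Matrix.mul_apply_eq_vecMul,
        hinv _ (hWZ b)] at h3
      simpa using h3.symm
    have hu : IsUnit Sig₀.det := hSig₀.det_pos.ne'.isUnit
    calc Aba = Aba * Sig₀ * Sig₀⁻¹ := by rw [Matrix.mul_assoc, Matrix.mul_nonsing_inv _ hu, Matrix.mul_one]
      _ = 0 := by rw [h2, Matrix.zero_mul]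
  refine ⟨hAba, hBb, ?_⟩
  have hA1 : Tz * Ae = Matrix.fromBlocks Aa Aab Aba Ab * Tz := by
    rw [← hAdec, Matrix.mul_assoc, hTz2, Matrix.mul_one]
  refine aux_hurwitz (l := Fin l) Ae Be hstab (Matrix.of fun b => Tz (Sum.inr b)) ?_ Ab ?_ ?_
  · ext b c
    have := congrFun (congrFun hTz1 (Sum.inr b)) (Sum.inr c)
    simpa [Matrix.mul_apply, Matrix.one_apply] using this
  · ext b c
    have := congrFun (congrFun hA1 (Sum.inr b)) c
    simpa [Matrix.mul_apply, hAba] using this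
  · ext b c
    have := congrFun (congrFun hBdec (Sum.inr b)) c
    simpa [Matrix.mul_apply, hBb] using this
end

section
/- Let A_a ∈ ℝ^{l×l}, B_a ∈ ℝ^{l×m}, and let data matrices Z_a ∈ ℝ^{l×N}, U ∈ ℝ^{m×N} be given, with Ż_a := A_a·Z_a + B_a·U. Suppose there exists Q ∈ ℝ^{N×l} such that Z_a·Q is symmetric and positive definite and Ż_a·Q + (Ż_a·Q)^⊤ is negative definite. Then the matrix K := U·Q·(Z_a·Q)^{−1} ∈ ℝ^{m×l} is such that A_a + B_a·K is Hurwitz. -/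
open Matrix Filter
open scoped Kronecker

theorem hurwitz_aux {l : ℕ} (M P : Matrix (Fin l) (Fin l) ℝ) (hP : P.PosDef)
    (hS : (-(M * P + (M * P)ᵀ)).PosDef) : IsHurwitz M := by
  intro z hz
  rw [spectrum.mem_iff, Matrix.isUnit_iff_isUnit_det, isUnit_iff_ne_zero, not_not] at hz
  obtain ⟨v, hv0, hv⟩ := Matrix.exists_vecMul_eq_zero_iff.mpr hz
  rw [Matrix.vecMul_sub, sub_eq_zero, Matrix.algebraMap_eq_diagonal] at hv
  set x : Fin l → ℝ := fun i => (v i).re with hx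
  set y : Fin l → ℝ := fun i => (v i).im with hy
  have h1 : x ᵥ* M = z.re • x - z.im • y := by
    ext j
    have := congrArg Complex.re (congrFun hv j)
    rw [Matrix.vecMul_diagonal] at this
    simp [Matrix.vecMul, dotProduct] at this
    simp [Matrix.vecMul, dotProduct, hx, hy]
    linarith
  have h2 : y ᵥ* M = z.im • x + z.re • y := by
    ext j
    have := congrArg Complex.im (congrFun hv j)
    rw [Matrix.vecMul_diagonal] at this
    simp [Matrix.vecMul, dotProduct] at this
    simp [Matrix.vecMul, dotProduct, hx, hy]
    linarith
  have hT : Pᵀ = P := by simpa [Matrix.IsHermitian] using hP.isHermitian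
  have hsym : y ⬝ᵥ (P *ᵥ x) = x ⬝ᵥ (P *ᵥ y) := by
    rw [Matrix.dotProduct_mulVec, ← Matrix.mulVec_transpose, hT, dotProduct_comm]
  have quad : ∀ w : Fin l → ℝ, w ⬝ᵥ ((-(M * P + (M * P)ᵀ)) *ᵥ w)
      = -2 * ((w ᵥ* M) ⬝ᵥ (P *ᵥ w)) := by
    intro w
    have e1 : w ⬝ᵥ ((M * P) *ᵥ w) = (w ᵥ* M) ⬝ᵥ (P *ᵥ w) := by
      rw [← Matrix.mulVec_mulVec, Matrix.dotProduct_mulVec]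
    have e2 : w ⬝ᵥ ((M * P)ᵀ *ᵥ w) = w ⬝ᵥ ((M * P) *ᵥ w) := by
      rw [Matrix.mulVec_transpose, dotProduct_comm, Matrix.dotProduct_mulVec]
    rw [Matrix.neg_mulVec, Matrix.add_mulVec, dotProduct_neg, dotProduct_add, e2, e1]
    ring
  have qx := quad x
  have qy := quad y
  rw [h1, sub_dotProduct, smul_dotProduct, smul_dotProduct, smul_eq_mul, smul_eq_mul, hsym] at qx
  rw [h2, add_dotProduct, smul_dotProduct, smul_dotProduct, smul_eq_mul, smul_eq_mul] at qy
  have px := hP.posSemidef.dotProduct_mulVec_nonneg x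
  have py := hP.posSemidef.dotProduct_mulVec_nonneg y
  have sx := hS.posSemidef.dotProduct_mulVec_nonneg x
  have sy := hS.posSemidef.dotProduct_mulVec_nonneg y
  simp only [star_trivial] at px py sx sy
  have hpos : 0 < x ⬝ᵥ ((-(M * P + (M * P)ᵀ)) *ᵥ x) + y ⬝ᵥ ((-(M * P + (M * P)ᵀ)) *ᵥ y) := by
    by_cases hx0 : x = 0
    · have hy0 : y ≠ 0 := by
        intro hy0
        apply hv0
        ext i
        exact Complex.ext (congrFun hx0 i) (congrFun hy0 i)
      have := hS.dotProduct_mulVec_pos hy0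
      simp only [star_trivial] at this
      linarith
    · have := hS.dotProduct_mulVec_pos hx0
      simp only [star_trivial] at this
      linarith
  rw [qx, qy] at hpos
  by_contra hre
  push Not at hre
  nlinarith [mul_nonneg hre px, mul_nonneg hre py]

/-- data-driven LMI stabilization, cf. De Persis–Tesi.
With data `Z_a`, `U` and `Ż_a := A_a·Z_a + B_a·U`, if `Q` satisfies the LMI
`Z_a·Q = (Z_a·Q)ᵀ ≻ 0` and `Ż_a·Q + (Ż_a·Q)ᵀ ≺ 0`, then
`K := U·Q·(Z_a·Q)⁻¹` makes `A_a + B_a·K` Hurwitz. -/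
theorem stmt16 {l m N : ℕ}
    (Aa : Matrix (Fin l) (Fin l) ℝ) (Ba : Matrix (Fin l) (Fin m) ℝ)
    (Za : Matrix (Fin l) (Fin N) ℝ) (U : Matrix (Fin m) (Fin N) ℝ)
    (Zdot : Matrix (Fin l) (Fin N) ℝ) (hZdot : Zdot = Aa * Za + Ba * U)
    (Q : Matrix (Fin N) (Fin l) ℝ)
    (hpos : (Za * Q).PosDef)
    (hneg : (-(Zdot * Q + (Zdot * Q)ᵀ)).PosDef) :
    IsHurwitz (Aa + Ba * (U * Q * (Za * Q)⁻¹)) := by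
  apply hurwitz_aux _ (Za * Q) hpos
  have hu : IsUnit (Za * Q).det := (Matrix.isUnit_iff_isUnit_det _).mp hpos.isUnit
  have : (Aa + Ba * (U * Q * (Za * Q)⁻¹)) * (Za * Q) = Zdot * Q := by
    rw [hZdot, Matrix.add_mul, Matrix.mul_assoc Ba, Matrix.nonsing_inv_mul_cancel_right _ _ hu,
      Matrix.add_mul, Matrix.mul_assoc, Matrix.mul_assoc]
  rw [this]
  exact hneg
end
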